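/- arXiv:1104.3745 — 3 statements merged into one kernel-verified Lean document; each statement's English description precedes it below -/
import Mathlib

section
/- Let n ≥ 2 and let Ω = ℝⁿ \ {0} be the punctured Euclidean space, with quasihyperbolic metric k_Ω. Then for all x, y ∈ Ω, k_Ω(x,y) = √(α² + log²(|x|/|y|)), where α ∈ [0, π] is the angle between the line segments [x,0] and [0,y] at the origin (i.e., the angle between the vectors x and y). -/
open Set Metric MeasureTheory

noncomputable section

variable {E : Type*} [NormedAddCommGroup E] [NormedSpace ℝ E]

/-- The quasihyperbolic length of a path `γ` (parametrized on `[0,1]`) in the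
domain `Ω`: the integral of `‖γ'(t)‖ / d(γ(t), ∂Ω)`. -/
def qhLength (Ω : Set E) (γ : ℝ → E) : ℝ :=
  ∫ t in (0:ℝ)..1, ‖deriv γ t‖ / infDist (γ t) (frontier Ω)

/-- A rectifiable curve in `Ω` joining `x` and `y`, formalized as a map on `[0,1]`
which is Lipschitz on `[0,1]` (every rectifiable curve admits such a
parametrization), takes values in `Ω`, and joins `x` to `y`. -/
def IsRectPath (Ω : Set E) (x y : E) (γ : ℝ → E) : Prop :=
  (∃ K : NNReal, LipschitzOnWith K γ (Icc 0 1)) ∧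
    MapsTo γ (Icc 0 1) Ω ∧ γ 0 = x ∧ γ 1 = y

/-- The quasihyperbolic metric on `Ω`. -/
def qhDist (Ω : Set E) (x y : E) : ℝ :=
  sInf (qhLength Ω '' {γ | IsRectPath Ω x y γ})

/-- The quasihyperbolic ball. -/
def qhBall (Ω : Set E) (x : E) (r : ℝ) : Set E :=
  {y ∈ Ω | qhDist Ω x y < r}

/-- The distance ratio metric (`j`-metric) on `Ω`. -/
def jDist (Ω : Set E) (x y : E) : ℝ :=
  Real.log (1 + dist x y / min (infDist x (frontier Ω)) (infDist y (frontier Ω)))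

/-- The `j`-metric ball. -/
def jBall (Ω : Set E) (x : E) (r : ℝ) : Set E :=
  {y ∈ Ω | jDist Ω x y < r}

/-- `G` is strictly starlike with respect to `x`: it is starlike with respect to `x`
and every half-line emanating from `x` meets `∂G` at exactly one point. -/
def StrictlyStarlike (G : Set E) (x : E) : Prop :=
  StarConvex ℝ x G ∧
    ∀ v : E, v ≠ 0 → ∃! p : E, p ∈ frontier G ∧ ∃ t : ℝ, 0 < t ∧ p = x + t • v

/-- `G` is strictly convex: it is strictly starlike with respect to each of its points. -/
def StrictlyConvexSet (G : Set E) : Prop :=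
  ∀ x ∈ G, StrictlyStarlike G x

/-- A half-line: `{t • v + z : t > 0}` or `{t • v + z : t ≥ 0}` with `v ≠ 0`. -/
def IsHalfline (L : Set E) : Prop :=
  ∃ z v : E, v ≠ 0 ∧
    (L = {p | ∃ t : ℝ, 0 < t ∧ p = t • v + z} ∨
      L = {p | ∃ t : ℝ, 0 ≤ t ∧ p = t • v + z})

/-- `G` is close-to-convex: its complement can be covered with pairwise
non-intersecting half-lines. -/
def CloseToConvex (G : Set E) : Prop :=
  ∃ 𝒮 : Set (Set E), (∀ L ∈ 𝒮, IsHalfline L) ∧ 𝒮.PairwiseDisjoint id ∧ Gᶜ = ⋃₀ 𝒮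

end

/-! In the coordinates `(u / ‖u‖, log ‖u‖)` the quasihyperbolic length element `|dz| / |z|` of the
punctured space is that of the product metric of the cylinder `S × ℝ`. The formula is the distance
`D` of this cylinder.

Lower bound: the exact identity
`‖u - v‖² / (‖u‖ ‖v‖) = (2 sin (α / 2))² + (2 sinh (log (‖u‖ / ‖v‖) / 2))²` bounds `D u v` by
`‖u - v‖ / √(‖u‖ ‖v‖)` up to a factor tending to `1` as `u → v`. By the triangle inequality
`t ↦ D (γ 0) (γ t)` is then Lipschitz, with derivative at most `‖γ'‖ / ‖γ‖` almost everywhere;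
integrate.

Upper bound: `0`, `x` and `y` lie in a plane, identified with `ℂ`. There the logarithmic spiral
`t ↦ a exp (t log (b / a))` from `a` to `b` has constant quasihyperbolic speed `|log (b / a)|`,
which is `D a b`. -/

open InnerProductGeometry Filter Topology
open scoped NNReal

section SincAndSinh

theorem mul_sinc_eq_sin (x : ℝ) : x * Real.sinc x = Real.sin x := by
  rcases eq_or_ne x 0 with rfl | hx
  · simp
  · rw [Real.sinc_of_ne_zero hx, mul_div_cancel₀ _ hx]

theorem two_div_pi_le_sinc {x : ℝ} (hx₀ : 0 ≤ x) (hx : x ≤ Real.pi / 2) :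
    2 / Real.pi ≤ Real.sinc x := by
  rcases hx₀.eq_or_lt with rfl | hpos
  · rw [Real.sinc_zero, div_le_one Real.pi_pos]
    exact Real.two_le_pi
  · rw [Real.sinc_of_ne_zero hpos.ne', le_div_iff₀ hpos]
    exact Real.mul_le_sin hx₀ hx

theorem sq_le_sinh_sq (x : ℝ) : x ^ 2 ≤ Real.sinh x ^ 2 := by
  rw [sq_le_sq, Real.abs_sinh]
  exact Real.self_le_sinh_iff.2 (abs_nonneg x)

theorem cosh_eq_one_add_two_mul_sinh_half_sq (x : ℝ) :
    Real.cosh x = 1 + 2 * Real.sinh (x / 2) ^ 2 := by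
  have h := Real.cosh_two_mul (x / 2)
  rw [mul_div_cancel₀ x two_ne_zero, Real.cosh_sq] at h
  linarith

end SincAndSinh

section LogPolarDist

variable {V : Type*} [NormedAddCommGroup V] [InnerProductSpace ℝ V]

/-- The product distance of the cylinder `S × ℝ`, where the unit sphere `S` carries its angular
metric, in the coordinates `(u / ‖u‖, log ‖u‖)` of the punctured space. It is only meaningful
away from the origin. -/
noncomputable def logPolarDist (u v : V) : ℝ :=
  Real.sqrt (angle u v ^ 2 + Real.log (‖u‖ / ‖v‖) ^ 2)

theorem logPolarDist_sq (u v : V) :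
    logPolarDist u v ^ 2 = angle u v ^ 2 + Real.log (‖u‖ / ‖v‖) ^ 2 :=
  Real.sq_sqrt (by positivity)

theorem logPolarDist_self {u : V} (hu : u ≠ 0) : logPolarDist u u = 0 := by
  simp [logPolarDist, angle_self hu, div_self (norm_ne_zero_iff.2 hu)]

theorem logPolarDist_comm (u v : V) : logPolarDist u v = logPolarDist v u := by
  rw [logPolarDist, logPolarDist, angle_comm, ← inv_div ‖v‖ ‖u‖, Real.log_inv, neg_sq]

theorem logPolarDist_map {W : Type*} [NormedAddCommGroup W] [InnerProductSpace ℝ W]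
    (φ : V →ₗᵢ[ℝ] W) (u v : V) : logPolarDist (φ u) (φ v) = logPolarDist u v := by
  simp only [logPolarDist, φ.angle_map, φ.norm_map]

theorem logPolarDist_triangle {u v w : V} (hu : u ≠ 0) (hv : v ≠ 0) (hw : w ≠ 0) :
    logPolarDist u w ≤ logPolarDist u v + logPolarDist v w := by
  have hlog : Real.log (‖u‖ / ‖w‖) = Real.log (‖u‖ / ‖v‖) + Real.log (‖v‖ / ‖w‖) := by
    rw [← norm_ne_zero_iff] at hu hv hw
    rw [← Real.log_mul (by positivity) (by positivity), div_mul_div_cancel₀ hv]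
  have hangle : angle u w ^ 2 ≤ (angle u v + angle v w) ^ 2 :=
    pow_le_pow_left₀ (angle_nonneg u w) (angle_le_angle_add_angle u v w) 2
  simp only [logPolarDist, ← Complex.norm_add_mul_I]
  calc ‖(angle u w + Real.log (‖u‖ / ‖w‖) * Complex.I : ℂ)‖
      ≤ ‖((angle u v + angle v w : ℝ)
          + (Real.log (‖u‖ / ‖v‖) + Real.log (‖v‖ / ‖w‖) : ℝ) * Complex.I : ℂ)‖ := by
        rw [hlog, Complex.norm_add_mul_I, Complex.norm_add_mul_I]
        gcongr
    _ = ‖(angle u v + Real.log (‖u‖ / ‖v‖) * Complex.I)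
          + (angle v w + Real.log (‖v‖ / ‖w‖) * Complex.I)‖ := by
        push_cast
        ring_nf
    _ ≤ _ := norm_add_le _ _

theorem abs_logPolarDist_sub_le {x u v : V} (hx : x ≠ 0) (hu : u ≠ 0) (hv : v ≠ 0) :
    |logPolarDist x u - logPolarDist x v| ≤ logPolarDist u v := by
  have huv := logPolarDist_triangle hx hu hv
  have hvu := logPolarDist_triangle hx hv hu
  rw [logPolarDist_comm v u] at hvu
  exact abs_sub_le_iff.2 ⟨by linarith, by linarith⟩

theorem norm_sub_sq_div_norm_mul_norm {u v : V} (hu : u ≠ 0) (hv : v ≠ 0) :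
    ‖u - v‖ ^ 2 / (‖u‖ * ‖v‖) =
      (2 * Real.sin (angle u v / 2)) ^ 2 + (2 * Real.sinh (Real.log (‖u‖ / ‖v‖) / 2)) ^ 2 := by
  have hcosh : (‖u‖ / ‖v‖ + (‖u‖ / ‖v‖)⁻¹) / 2 =
      1 + 2 * Real.sinh (Real.log (‖u‖ / ‖v‖) / 2) ^ 2 := by
    rw [← cosh_eq_one_add_two_mul_sinh_half_sq, Real.cosh_log (by positivity)]
  have hcos : Real.sin (angle u v / 2) ^ 2 = 1 / 2 - inner ℝ u v / (‖u‖ * ‖v‖) / 2 := by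
    rw [Real.sin_sq_eq_half_sub, mul_div_cancel₀ _ two_ne_zero, cos_angle]
  have hsum : ‖u - v‖ ^ 2 / (‖u‖ * ‖v‖) =
      4 * (1 / 2 - inner ℝ u v / (‖u‖ * ‖v‖) / 2)
        + 2 * ((‖u‖ / ‖v‖ + (‖u‖ / ‖v‖)⁻¹) / 2 - 1) := by
    rw [← norm_ne_zero_iff] at hu hv
    rw [norm_sub_sq_real]
    field_simp
    ring
  rw [hsum, hcosh, ← hcos]
  ring

theorem two_div_pi_le_sinc_half_angle (u v : V) : 2 / Real.pi ≤ Real.sinc (angle u v / 2) :=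
  two_div_pi_le_sinc (by linarith [angle_nonneg u v]) (by linarith [angle_le_pi u v])

theorem sinc_half_angle_nonneg (u v : V) : 0 ≤ Real.sinc (angle u v / 2) :=
  (div_nonneg zero_le_two Real.pi_pos.le).trans (two_div_pi_le_sinc_half_angle u v)

theorem tendsto_sinc_half_angle {v : V} (hv : v ≠ 0) :
    Tendsto (fun u ↦ Real.sinc (angle u v / 2)) (𝓝 v) (𝓝 1) := by
  have hangle : ContinuousAt (fun u ↦ angle u v) v :=
    ContinuousAt.comp (f := fun u ↦ (u, v)) (continuousAt_angle hv hv) (by fun_prop)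
  have hsinc : ContinuousAt (fun u ↦ Real.sinc (angle u v / 2)) v :=
    Real.continuous_sinc.continuousAt.comp (hangle.div_const 2)
  simpa only [angle_self hv, zero_div, Real.sinc_zero] using hsinc.tendsto

/-- The factor `sinc (angle u v / 2)` tends to `1` as `u → v`, so infinitesimally `logPolarDist`
is at most the quasihyperbolic length element. -/
theorem sinc_mul_logPolarDist_le {u v : V} (hu : u ≠ 0) (hv : v ≠ 0) :
    Real.sinc (angle u v / 2) * logPolarDist u v ≤ ‖u - v‖ / Real.sqrt (‖u‖ * ‖v‖) := by
  set c := Real.sinc (angle u v / 2)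
  set s := Real.log (‖u‖ / ‖v‖)
  have hc : c ^ 2 ≤ 1 := pow_le_one₀ (sinc_half_angle_nonneg u v) (Real.sinc_le_one _)
  have hsin : c * angle u v = 2 * Real.sin (angle u v / 2) := by
    rw [← mul_sinc_eq_sin]
    ring
  refine le_of_sq_le_sq ?_ (by positivity)
  calc (c * logPolarDist u v) ^ 2
      = (c * angle u v) ^ 2 + c ^ 2 * s ^ 2 := by rw [mul_pow, logPolarDist_sq]; ring
    _ ≤ (2 * Real.sin (angle u v / 2)) ^ 2 + 4 * (s / 2) ^ 2 := by
        rw [hsin]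
        linarith [mul_le_mul_of_nonneg_right hc (sq_nonneg s)]
    _ ≤ (2 * Real.sin (angle u v / 2)) ^ 2 + (2 * Real.sinh (s / 2)) ^ 2 := by
        linarith [sq_le_sinh_sq (s / 2)]
    _ = (‖u - v‖ / Real.sqrt (‖u‖ * ‖v‖)) ^ 2 := by
        rw [← norm_sub_sq_div_norm_mul_norm hu hv, div_pow, Real.sq_sqrt (by positivity)]

theorem logPolarDist_le {u v : V} (hu : u ≠ 0) (hv : v ≠ 0) :
    logPolarDist u v ≤ Real.pi / 2 * (‖u - v‖ / Real.sqrt (‖u‖ * ‖v‖)) := by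
  calc logPolarDist u v = Real.pi / 2 * (2 / Real.pi * logPolarDist u v) := by field_simp
    _ ≤ Real.pi / 2 * (Real.sinc (angle u v / 2) * logPolarDist u v) := by
        gcongr
        · exact Real.sqrt_nonneg _
        · exact two_div_pi_le_sinc_half_angle u v
    _ ≤ Real.pi / 2 * (‖u - v‖ / Real.sqrt (‖u‖ * ‖v‖)) := by
        gcongr
        exact sinc_mul_logPolarDist_le hu hv

theorem lipschitzOnWith_logPolarDist {x : V} (hx : x ≠ 0) {m : ℝ≥0} (hm : 0 < m) :
    LipschitzOnWith (NNReal.pi / 2 / m) (logPolarDist x) {v | m ≤ ‖v‖} := by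
  have hne : ∀ v ∈ {v : V | m ≤ ‖v‖}, v ≠ 0 := fun v hv ↦
    norm_pos_iff.1 ((NNReal.coe_pos.2 hm).trans_le hv)
  refine LipschitzOnWith.of_dist_le_mul fun u hu v hv ↦ ?_
  calc dist (logPolarDist x u) (logPolarDist x v)
      ≤ logPolarDist u v := abs_logPolarDist_sub_le hx (hne u hu) (hne v hv)
    _ ≤ Real.pi / 2 * (‖u - v‖ / Real.sqrt (‖u‖ * ‖v‖)) := logPolarDist_le (hne u hu) (hne v hv)
    _ ≤ Real.pi / 2 * (‖u - v‖ / Real.sqrt (m * m)) := by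
        have : (0 : ℝ) < m := hm
        gcongr
        · exact hu
        · exact hv
    _ = (NNReal.pi / 2 / m : ℝ≥0) * dist u v := by
        rw [Real.sqrt_mul_self m.coe_nonneg, dist_eq_norm]
        push_cast [NNReal.coe_real_pi]
        ring

end LogPolarDist

section CurvesAvoidingZero

variable {E : Type*} [NormedAddCommGroup E] [NormedSpace ℝ E] [CompleteSpace E]

theorem intervalIntegrable_norm_deriv_div_norm {γ : ℝ → E} {K : ℝ≥0} {a b : ℝ}
    (hab : a ≤ b) (hγ : LipschitzOnWith K γ (Icc a b)) (h₀ : ∀ t ∈ Icc a b, γ t ≠ 0) :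
    IntervalIntegrable (fun t ↦ ‖deriv γ t‖ / ‖γ t‖) volume a b := by
  obtain ⟨m, hm, hmγ⟩ := isCompact_Icc.exists_forall_le' hγ.continuousOn.nnnorm
    fun t ht ↦ nnnorm_pos.2 (h₀ t ht)
  have : (0 : ℝ) < m := hm
  rw [intervalIntegrable_iff_integrableOn_Ioo_of_le hab]
  refine Integrable.of_bound (C := K / m) ?_ ?_
  · have hγm : AEStronglyMeasurable γ (volume.restrict (Ioo a b)) :=
      (hγ.continuousOn.mono Ioo_subset_Icc_self).aestronglyMeasurable measurableSet_Ioo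
    exact (aestronglyMeasurable_deriv γ _).norm.div₀ hγm.norm
  · filter_upwards [ae_restrict_mem measurableSet_Ioo] with t ht
    have hderiv := norm_deriv_le_of_lipschitzOn (Icc_mem_nhds ht.1 ht.2) hγ
    rw [norm_div, norm_norm, norm_norm]
    gcongr
    exact hmγ t (Ioo_subset_Icc_self ht)

end CurvesAvoidingZero

section LowerBound

variable {V : Type*} [NormedAddCommGroup V] [InnerProductSpace ℝ V]

theorem abs_deriv_logPolarDist_comp_le {x : V} (hx : x ≠ 0) {γ : ℝ → V} {t : ℝ} (ht : γ t ≠ 0)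
    {γ' : V} (hγ : HasDerivAt γ γ' t) {d' : ℝ}
    (hd : HasDerivAt (fun s ↦ logPolarDist x (γ s)) d' t) :
    |d'| ≤ ‖γ'‖ / ‖γ t‖ := by
  have hγt : Tendsto γ (𝓝[≠] t) (𝓝 (γ t)) := hγ.continuousAt.tendsto.mono_left nhdsWithin_le_nhds
  have hne : ∀ᶠ s in 𝓝[≠] t, γ s ≠ 0 := hγt.eventually_ne ht
  have hsinc : Tendsto (fun s ↦ Real.sinc (angle (γ s) (γ t) / 2)) (𝓝[≠] t) (𝓝 1) :=
    (tendsto_sinc_half_angle ht).comp hγt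
  have hlhs : Tendsto (fun s ↦ Real.sinc (angle (γ s) (γ t) / 2) *
      |slope (fun s ↦ logPolarDist x (γ s)) t s|) (𝓝[≠] t) (𝓝 (1 * |d'|)) :=
    hsinc.mul (hasDerivAt_iff_tendsto_slope.1 hd).abs
  have hrhs : Tendsto (fun s ↦ ‖slope γ t s‖ / Real.sqrt (‖γ s‖ * ‖γ t‖)) (𝓝[≠] t)
      (𝓝 (‖γ'‖ / Real.sqrt (‖γ t‖ * ‖γ t‖))) :=
    (hasDerivAt_iff_tendsto_slope.1 hγ).norm.div (hγt.norm.mul_const _).sqrt (by positivity)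
  rw [one_mul] at hlhs
  rw [Real.sqrt_mul_self (norm_nonneg _)] at hrhs
  refine le_of_tendsto_of_tendsto hlhs hrhs ?_
  filter_upwards [hne] with s hs
  calc Real.sinc (angle (γ s) (γ t) / 2) * |slope (fun s ↦ logPolarDist x (γ s)) t s|
      = |s - t|⁻¹ * (Real.sinc (angle (γ s) (γ t) / 2) *
          |logPolarDist x (γ s) - logPolarDist x (γ t)|) := by
        rw [slope_def_field, abs_div]
        ring
    _ ≤ |s - t|⁻¹ * (Real.sinc (angle (γ s) (γ t) / 2) * logPolarDist (γ s) (γ t)) := by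
        gcongr
        · exact sinc_half_angle_nonneg _ _
        · exact abs_logPolarDist_sub_le hx hs ht
    _ ≤ |s - t|⁻¹ * (‖γ s - γ t‖ / Real.sqrt (‖γ s‖ * ‖γ t‖)) := by
        gcongr
        exact sinc_mul_logPolarDist_le hs ht
    _ = ‖slope γ t s‖ / Real.sqrt (‖γ s‖ * ‖γ t‖) := by
        rw [slope_def_module, norm_smul, norm_inv, Real.norm_eq_abs, mul_div_assoc]

theorem logPolarDist_le_integral_norm_deriv_div_norm [FiniteDimensional ℝ V] {γ : ℝ → V} {K : ℝ≥0}
    {a b : ℝ} (hab : a ≤ b) (hγ : LipschitzOnWith K γ (Icc a b))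
    (h₀ : ∀ t ∈ Icc a b, γ t ≠ 0) :
    logPolarDist (γ a) (γ b) ≤ ∫ t in a..b, ‖deriv γ t‖ / ‖γ t‖ := by
  set d : ℝ → ℝ := fun t ↦ logPolarDist (γ a) (γ t)
  have ha : γ a ≠ 0 := h₀ a (left_mem_Icc.2 hab)
  obtain ⟨m, hm, hmγ⟩ := isCompact_Icc.exists_forall_le' hγ.continuousOn.nnnorm
    fun t ht ↦ nnnorm_pos.2 (h₀ t ht)
  have hd : LipschitzOnWith (NNReal.pi / 2 / m * K) d (Icc a b) :=
    (lipschitzOnWith_logPolarDist ha hm).comp hγ hmγ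
  have hdac : AbsolutelyContinuousOnInterval d a b :=
    LipschitzOnWith.absolutelyContinuousOnInterval (by rwa [uIcc_of_le hab])
  have hderiv : ∀ᵐ t ∂volume.restrict (Icc a b), deriv d t ≤ ‖deriv γ t‖ / ‖γ t‖ := by
    rw [← restrict_Ioo_eq_restrict_Icc]
    filter_upwards [ae_restrict_mem measurableSet_Ioo,
      ae_restrict_of_ae hγ.ae_differentiableWithinAt_of_mem_real,
      ae_restrict_of_ae hd.ae_differentiableWithinAt_of_mem_real] with t ht hγt hdt
    have htI := Ioo_subset_Icc_self ht
    have hnhds : Icc a b ∈ 𝓝 t := Icc_mem_nhds ht.1 ht.2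
    exact (le_abs_self _).trans <| abs_deriv_logPolarDist_comp_le ha (h₀ t htI)
      ((hγt htI).differentiableAt hnhds).hasDerivAt ((hdt htI).differentiableAt hnhds).hasDerivAt
  calc logPolarDist (γ a) (γ b) = d b - d a := by simp only [d, logPolarDist_self ha, sub_zero]
    _ = ∫ t in a..b, deriv d t := hdac.integral_deriv_eq_sub.symm
    _ ≤ ∫ t in a..b, ‖deriv γ t‖ / ‖γ t‖ :=
        intervalIntegral.integral_mono_ae_restrict hab hdac.intervalIntegrable_deriv
          (intervalIntegrable_norm_deriv_div_norm hab hγ h₀) hderiv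

end LowerBound

section LogSpiral

/-- The arc of logarithmic spiral from `a` to `b` in the punctured complex plane: the image under
`z ↦ a * exp z` of the segment from `0` to `log (b / a)`. The principal branch makes it turn by the
unoriented angle between `a` and `b`. -/
noncomputable def logSpiral (a b : ℂ) (t : ℝ) : ℂ :=
  a * Complex.exp (t * Complex.log (b / a))

variable {a b : ℂ}

theorem logSpiral_zero (a b : ℂ) : logSpiral a b 0 = a := by
  simp [logSpiral]

theorem logSpiral_one (ha : a ≠ 0) (hb : b ≠ 0) : logSpiral a b 1 = b := by
  rw [logSpiral, Complex.ofReal_one, one_mul, Complex.exp_log (div_ne_zero hb ha),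
    mul_div_cancel₀ b ha]

theorem logSpiral_ne_zero (ha : a ≠ 0) (b : ℂ) (t : ℝ) : logSpiral a b t ≠ 0 :=
  mul_ne_zero ha (Complex.exp_ne_zero _)

theorem contDiff_logSpiral (a b : ℂ) : ContDiff ℝ 1 (logSpiral a b) := by
  have : ContDiff ℝ 1 (fun t : ℝ ↦ (t : ℂ)) := Complex.ofRealCLM.contDiff
  unfold logSpiral
  fun_prop

theorem hasDerivAt_logSpiral (a b : ℂ) (t : ℝ) :
    HasDerivAt (logSpiral a b) (logSpiral a b t * Complex.log (b / a)) t := by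
  have h : HasDerivAt (fun s : ℝ ↦ (s * Complex.log (b / a) : ℂ)) (Complex.log (b / a)) t := by
    simpa using (Complex.ofRealCLM.hasDerivAt (x := t)).mul_const (Complex.log (b / a))
  refine (h.cexp.const_mul a).congr_deriv ?_
  rw [logSpiral, mul_assoc]

theorem logPolarDist_eq_norm_log_div (ha : a ≠ 0) (hb : b ≠ 0) :
    logPolarDist a b = ‖Complex.log (b / a)‖ := by
  rw [logPolarDist_comm, logPolarDist, Complex.angle_eq_abs_arg hb ha, sq_abs, ← norm_div,
    Complex.norm_eq_sqrt_sq_add_sq (Complex.log _), Complex.log_re, Complex.log_im, add_comm]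

end LogSpiral

section PuncturedSpace

theorem qhLength_compl_singleton {E : Type*} [NormedAddCommGroup E] [NormedSpace ℝ E]
    [Nontrivial E] (p : E) (γ : ℝ → E) :
    qhLength {p}ᶜ γ = ∫ t in (0 : ℝ)..1, ‖deriv γ t‖ / dist (γ t) p := by
  have : frontier ({p}ᶜ : Set E) = {p} := by
    rw [frontier_compl, frontier, closure_singleton, interior_singleton, sdiff_empty]
  simp only [qhLength, this, infDist_singleton]

variable {V : Type*} [NormedAddCommGroup V] [InnerProductSpace ℝ V]

theorem exists_linearIsometry_complex_mem_range (hV : 1 < Module.rank ℝ V) {x : V} (hx : x ≠ 0)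
    (y : V) : ∃ φ : ℂ →ₗᵢ[ℝ] V, x ∈ range φ ∧ y ∈ range φ := by
  obtain ⟨w, hxw, hy⟩ : ∃ w, LinearIndependent ℝ ![x, w] ∧ y ∈ Submodule.span ℝ {x, w} := by
    by_cases hxy : LinearIndependent ℝ ![x, y]
    · exact ⟨y, hxy, Submodule.subset_span (by simp)⟩
    · obtain ⟨w, hw⟩ := exists_linearIndependent_pair_of_one_lt_rank hV hx
      rw [LinearIndependent.pair_iff' hx] at hxy
      push Not at hxy
      obtain ⟨c, rfl⟩ := hxy
      exact ⟨w, hw, Submodule.smul_mem _ c (Submodule.subset_span (by simp))⟩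
  have hrank : Module.finrank ℝ (Submodule.span ℝ {x, w}) = 2 := by
    rw [← Matrix.range_cons_cons_empty x w, finrank_span_eq_card hxw, Fintype.card_fin]
  have : FiniteDimensional ℝ (Submodule.span ℝ {x, w}) :=
    Module.finite_of_finrank_eq_succ hrank
  let ι : ℂ ≃ₗᵢ[ℝ] Submodule.span ℝ {x, w} := Complex.isometryOfOrthonormal
    ((stdOrthonormalBasis ℝ _).reindex (finCongr hrank))
  have hι {v : V} (hv : v ∈ Submodule.span ℝ {x, w}) :
      v ∈ range ((Submodule.span ℝ {x, w}).subtypeₗᵢ.comp ι.toLinearIsometry) :=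
    ⟨ι.symm ⟨v, hv⟩, by simp⟩
  exact ⟨_, hι (Submodule.subset_span (by simp)), hι hy⟩

theorem exists_isRectPath_qhLength_eq (hV : 1 < Module.rank ℝ V) {x y : V} (hx : x ≠ 0)
    (hy : y ≠ 0) : ∃ γ, IsRectPath {0}ᶜ x y γ ∧ qhLength {0}ᶜ γ = logPolarDist x y := by
  obtain ⟨φ, ⟨a, rfl⟩, ⟨b, rfl⟩⟩ := exists_linearIsometry_complex_mem_range hV hx y
  have ha : a ≠ 0 := by rintro rfl; exact hx φ.map_zero
  have hb : b ≠ 0 := by rintro rfl; exact hy φ.map_zero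
  have : Nontrivial V := ⟨φ a, 0, hx⟩
  have hspeed (t : ℝ) : ‖deriv (φ ∘ logSpiral a b) t‖ / dist ((φ ∘ logSpiral a b) t) 0 =
      logPolarDist (φ a) (φ b) := by
    have hderiv : HasDerivAt (φ ∘ logSpiral a b) (φ (logSpiral a b t * Complex.log (b / a))) t :=
      φ.toContinuousLinearMap.hasFDerivAt.comp_hasDerivAt t (hasDerivAt_logSpiral a b t)
    rw [hderiv.deriv, dist_zero_right, Function.comp_apply, φ.norm_map, φ.norm_map, norm_mul,
      mul_div_cancel_left₀ _ (norm_ne_zero_iff.2 (logSpiral_ne_zero ha b t)), logPolarDist_map,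
      logPolarDist_eq_norm_log_div ha hb]
  obtain ⟨K, hK⟩ := (contDiff_logSpiral a b).contDiffOn.exists_lipschitzOnWith one_ne_zero
    (convex_Icc 0 1) isCompact_Icc
  refine ⟨φ ∘ logSpiral a b, ⟨⟨_, φ.lipschitz.comp_lipschitzOnWith hK⟩, fun t _ ↦ ?_, ?_, ?_⟩, ?_⟩
  · exact (map_ne_zero_iff φ φ.injective).2 (logSpiral_ne_zero ha b t)
  · rw [Function.comp_apply, logSpiral_zero]
  · rw [Function.comp_apply, logSpiral_one ha hb]
  · simp only [qhLength_compl_singleton, hspeed, intervalIntegral.integral_const, sub_zero,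
      one_smul]

theorem qh_punctured_space_formula_general [FiniteDimensional ℝ V] (hV : 1 < Module.rank ℝ V)
    {x y : V} (hx : x ≠ 0) (hy : y ≠ 0) :
    qhDist ({0}ᶜ : Set V) x y = Real.sqrt (angle x y ^ 2 + Real.log (‖x‖ / ‖y‖) ^ 2) := by
  have : Nontrivial V := ⟨x, 0, hx⟩
  have hleast : IsLeast (qhLength {0}ᶜ '' {γ | IsRectPath {0}ᶜ x y γ}) (logPolarDist x y) := by
    refine ⟨exists_isRectPath_qhLength_eq hV hx hy, ?_⟩
    rintro _ ⟨γ, ⟨⟨K, hK⟩, hγ, rfl, rfl⟩, rfl⟩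
    simpa only [qhLength_compl_singleton, dist_zero_right] using
      logPolarDist_le_integral_norm_deriv_div_norm zero_le_one hK hγ
  exact hleast.csInf_eq

end PuncturedSpace

/-- Martin–Osgood formula for the quasihyperbolic metric of the
punctured space `ℝⁿ \ {0}`. -/
theorem qh_punctured_space_formula (n : ℕ) (hn : 2 ≤ n)
    (x y : EuclideanSpace ℝ (Fin n)) (hx : x ≠ 0) (hy : y ≠ 0) :
    qhDist ({0}ᶜ : Set (EuclideanSpace ℝ (Fin n))) x y =
      Real.sqrt (InnerProductGeometry.angle x y ^ 2 + Real.log (‖x‖ / ‖y‖) ^ 2) := by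
  have hrank : 1 < Module.rank ℝ (EuclideanSpace ℝ (Fin n)) := by
    rw [← Module.finrank_eq_rank, finrank_euclideanSpace_fin]
    exact_mod_cast hn
  exact qh_punctured_space_formula_general hrank hx hy
end

section
/- Let Ω ⊊ ℝⁿ (n ≥ 2) be a proper subdomain and let x, y ∈ Ω. Then there exists a quasihyperbolic geodesic from x to y, i.e., a rectifiable curve γ in Ω joining x and y whose quasihyperbolic length achieves the infimum: ℓ_k(γ) = k_Ω(x,y). -/
open Set Metric MeasureTheory

/-!
The idea is to trade the length functional for the distance ratio metric `j`. Every path `σ`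
satisfies `j ≤ ℓ_k`, because `s ↦ log (d(p) + |σ(s) - p|)` has derivative at most
`‖σ'‖ / d(σ, ∂Ω)`. Hence a path of length `ℓ`, parametrized proportionally to its quasihyperbolic
length, satisfies `j(γ(s), γ(t)) ≤ ℓ |s - t|`. Conversely, since `j` is infinitesimally the
quasihyperbolic metric, a path with `j(γ(s), γ(t)) ≤ L |s - t|` has length at most `L`.

The condition `j(γ(s), γ(t)) ≤ L |s - t|` involves no derivative and is closed under pointwise
limits, and closed `j`-balls are compact in `Ω`. By Tychonoff's theorem the paths satisfying it form
a compact set, so that the nonempty sets obtained for `L > k_Ω(x, y)` have a common element.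
-/

open Filter Topology
open scoped NNReal

section Calculus

theorem lipschitzOnWith_log_Ici {δ : ℝ≥0} (hδ : 0 < δ) :
    LipschitzOnWith δ⁻¹ Real.log (Ici (δ : ℝ)) := by
  have hpos : ∀ u ∈ Ici (δ : ℝ), 0 < u := fun u hu => (NNReal.coe_pos.2 hδ).trans_le hu
  refine Convex.lipschitzOnWith_of_nnnorm_deriv_le
    (fun u hu => Real.differentiableAt_log (hpos u hu).ne') (fun u hu => ?_) (convex_Ici _)
  rw [← NNReal.coe_le_coe, coe_nnnorm, Real.deriv_log, NNReal.coe_inv,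
    Real.norm_of_nonneg (inv_nonneg.2 (hpos u hu).le)]
  exact inv_anti₀ (NNReal.coe_pos.2 hδ) hu

theorem exp_sub_one_le_mul_exp (u : ℝ) : Real.exp u - 1 ≤ u * Real.exp u := by
  have h := mul_le_mul_of_nonneg_right (Real.add_one_le_exp (-u)) (Real.exp_pos u).le
  rw [← Real.exp_add, neg_add_cancel, Real.exp_zero] at h
  linarith

theorem norm_le_norm_of_hasDerivAt {F G : Type*} [NormedAddCommGroup F] [NormedSpace ℝ F]
    [NormedAddCommGroup G] [NormedSpace ℝ G] {f : ℝ → F} {g : ℝ → G} {f' : F} {g' : G} {t : ℝ}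
    (hf : HasDerivAt f f' t) (hg : HasDerivAt g g' t)
    (hfg : ∀ᶠ s in 𝓝[>] t, ‖f s - f t‖ ≤ ‖g s - g t‖) : ‖f'‖ ≤ ‖g'‖ := by
  have hf_slope := (hf.tendsto_slope.mono_left (nhdsGT_le_nhdsNE t)).norm
  have hg_slope := (hg.tendsto_slope.mono_left (nhdsGT_le_nhdsNE t)).norm
  refine le_of_tendsto_of_tendsto hf_slope hg_slope (hfg.mono fun s hs => ?_)
  simp only [slope_def_module, norm_smul]
  gcongr

end Calculus

variable {E : Type*} [NormedAddCommGroup E]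

section DistanceRatioMetric

variable {Ω : Set E} {x y : E}

theorem infDist_frontier_pos (hopen : IsOpen Ω) (hfr : (frontier Ω).Nonempty) (hx : x ∈ Ω) :
    0 < infDist x (frontier Ω) :=
  (isClosed_frontier.notMem_iff_infDist_pos hfr).1 fun h => (hopen.frontier_eq ▸ h).2 hx

theorem jDist_comm (Ω : Set E) (x y : E) : jDist Ω x y = jDist Ω y x := by
  rw [jDist, jDist, dist_comm, min_comm]

theorem jDist_nonneg (Ω : Set E) (x y : E) : 0 ≤ jDist Ω x y :=
  Real.log_nonneg <| le_add_of_nonneg_right <|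
    div_nonneg dist_nonneg (le_min infDist_nonneg infDist_nonneg)

theorem jDist_le_iff (hx : 0 < infDist x (frontier Ω)) (hy : 0 < infDist y (frontier Ω)) {r : ℝ} :
    jDist Ω x y ≤ r ↔
      dist x y ≤ min (infDist x (frontier Ω)) (infDist y (frontier Ω)) * (Real.exp r - 1) := by
  have hmin := lt_min hx hy
  rw [jDist, Real.log_le_iff_le_exp (by positivity), ← le_sub_iff_add_le', div_le_iff₀' hmin]

theorem dist_le_of_jDist_le (hx : 0 < infDist x (frontier Ω)) (hy : 0 < infDist y (frontier Ω))
    {r : ℝ} (hr : 0 ≤ r) (h : jDist Ω x y ≤ r) :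
    dist x y ≤ infDist y (frontier Ω) * (Real.exp r - 1) :=
  ((jDist_le_iff hx hy).1 h).trans <|
    mul_le_mul_of_nonneg_right (min_le_right _ _) (sub_nonneg.2 (Real.one_le_exp hr))

theorem eq_of_jDist_le_zero (hx : 0 < infDist x (frontier Ω)) (hy : 0 < infDist y (frontier Ω))
    (h : jDist Ω x y ≤ 0) : x = y :=
  dist_le_zero.1 <| by simpa using dist_le_of_jDist_le hx hy le_rfl h

theorem infDist_le_mul_exp_of_jDist_le (hx : 0 < infDist x (frontier Ω))
    (hy : 0 < infDist y (frontier Ω)) {r : ℝ} (hr : 0 ≤ r) (h : jDist Ω x y ≤ r) :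
    infDist x (frontier Ω) ≤ infDist y (frontier Ω) * Real.exp r := by
  linarith [infDist_le_infDist_add_dist (x := x) (y := y) (s := frontier Ω),
    dist_le_of_jDist_le hx hy hr h]

theorem isCompact_setOf_jDist_le [ProperSpace E] (hopen : IsOpen Ω)
    (hfr : (frontier Ω).Nonempty) (hx : x ∈ Ω) (r : ℝ) : IsCompact {z ∈ Ω | jDist Ω x z ≤ r} := by
  have hdx := infDist_frontier_pos hopen hfr hx
  have hset : {z ∈ Ω | jDist Ω x z ≤ r} = closure Ω ∩ {z | dist x z ≤
      min (infDist x (frontier Ω)) (infDist z (frontier Ω)) * (Real.exp r - 1)} := by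
    ext z
    refine ⟨fun ⟨hz, hj⟩ => ⟨subset_closure hz,
      (jDist_le_iff hdx (infDist_frontier_pos hopen hfr hz)).1 hj⟩, fun ⟨hz, hd⟩ => ?_⟩
    have hzΩ : z ∈ Ω := by
      by_contra hzΩ
      have hdz : infDist z (frontier Ω) = 0 :=
        infDist_zero_of_mem (hopen.frontier_eq ▸ ⟨hz, hzΩ⟩)
      have hxz : x = z := by simpa [hdz, infDist_nonneg] using hd
      exact hzΩ (hxz ▸ hx)
    exact ⟨hzΩ, (jDist_le_iff hdx (infDist_frontier_pos hopen hfr hzΩ)).2 hd⟩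
  rw [hset]
  refine isCompact_of_isClosed_isBounded (isClosed_closure.inter (isClosed_le (by fun_prop) ?_))
    (isBounded_closedBall (x := x) (r := infDist x (frontier Ω) * Real.exp r) |>.subset ?_)
  · exact (continuous_const.min (continuous_infDist_pt _)).mul continuous_const
  · rintro z ⟨-, hz⟩
    rw [mem_closedBall']
    calc dist x z ≤ min (infDist x (frontier Ω)) (infDist z (frontier Ω)) * (Real.exp r - 1) := hz
      _ ≤ min (infDist x (frontier Ω)) (infDist z (frontier Ω)) * Real.exp r :=
        mul_le_mul_of_nonneg_left (sub_le_self _ zero_le_one) (le_min infDist_nonneg infDist_nonneg)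
      _ ≤ infDist x (frontier Ω) * Real.exp r :=
        mul_le_mul_of_nonneg_right (min_le_left _ _) (Real.exp_pos r).le

end DistanceRatioMetric

/-- A path in `Ω` from `x` to `y` that is `L`-Lipschitz for the distance ratio metric. It is a
function on the unit interval without continuity assumption, so that the set of these paths lives
in a product space, to which Tychonoff's theorem applies. -/
structure IsJLipPath (Ω : Set E) (x y : E) (L : ℝ) (γ : unitInterval → E) : Prop where
  mem : ∀ t, γ t ∈ Ω
  source : γ 0 = x
  target : γ 1 = y
  jDist_le : ∀ s t, jDist Ω (γ s) (γ t) ≤ L * dist s t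

section JLipPath

theorem dist_unitInterval_le_one (s t : unitInterval) : dist s t ≤ 1 :=
  Real.dist_le_of_mem_Icc_01 s.2 t.2

variable {Ω : Set E} {x y : E} {L : ℝ}

namespace IsJLipPath

variable {γ : unitInterval → E}

theorem mono {L' : ℝ} (hγ : IsJLipPath Ω x y L γ) (hL : L ≤ L') : IsJLipPath Ω x y L' γ where
  __ := hγ
  jDist_le s t := (hγ.jDist_le s t).trans (mul_le_mul_of_nonneg_right hL dist_nonneg)

theorem nonneg (hγ : IsJLipPath Ω x y L γ) : 0 ≤ L := by
  have h01 : dist (0 : unitInterval) 1 = 1 := by simp [Subtype.dist_eq]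
  simpa [h01] using (jDist_nonneg Ω (γ 0) (γ 1)).trans (hγ.jDist_le 0 1)

theorem jDist_source_le (hγ : IsJLipPath Ω x y L γ) (t : unitInterval) : jDist Ω x (γ t) ≤ L := by
  calc jDist Ω x (γ t) ≤ L * dist 0 t := hγ.source ▸ hγ.jDist_le 0 t
    _ ≤ L := mul_le_of_le_one_right hγ.nonneg (dist_unitInterval_le_one 0 t)

theorem lipschitzWith (hopen : IsOpen Ω) (hfr : (frontier Ω).Nonempty)
    (hγ : IsJLipPath Ω x y L γ) :
    LipschitzWith (Real.toNNReal (infDist x (frontier Ω) * Real.exp L * (L * Real.exp L))) γ := by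
  have hpos : ∀ t, 0 < infDist (γ t) (frontier Ω) := fun t =>
    infDist_frontier_pos hopen hfr (hγ.mem t)
  have hx : 0 < infDist x (frontier Ω) := hγ.source ▸ hpos 0
  have hL := hγ.nonneg
  refine LipschitzWith.of_dist_le_mul fun s t => ?_
  have hst : L * dist s t ≤ L := mul_le_of_le_one_right hL (dist_unitInterval_le_one s t)
  have hdist : infDist (γ t) (frontier Ω) ≤ infDist x (frontier Ω) * Real.exp L :=
    infDist_le_mul_exp_of_jDist_le (hpos t) hx hL (jDist_comm Ω _ _ ▸ hγ.jDist_source_le t)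
  rw [Real.coe_toNNReal _ (by positivity)]
  calc dist (γ s) (γ t)
      ≤ infDist (γ t) (frontier Ω) * (Real.exp (L * dist s t) - 1) :=
        dist_le_of_jDist_le (hpos s) (hpos t) (by positivity) (hγ.jDist_le s t)
    _ ≤ infDist (γ t) (frontier Ω) * (L * dist s t * Real.exp (L * dist s t)) :=
        mul_le_mul_of_nonneg_left (exp_sub_one_le_mul_exp _) infDist_nonneg
    _ ≤ infDist x (frontier Ω) * Real.exp L * (L * dist s t * Real.exp L) := by gcongr
    _ = infDist x (frontier Ω) * Real.exp L * (L * Real.exp L) * dist s t := by ring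

theorem isRectPath_IccExtend (hopen : IsOpen Ω) (hfr : (frontier Ω).Nonempty)
    (hγ : IsJLipPath Ω x y L γ) : IsRectPath Ω x y (IccExtend zero_le_one γ) :=
  ⟨⟨_, ((hγ.lipschitzWith hopen hfr).comp (.projIcc zero_le_one)).lipschitzOnWith⟩,
    fun _ _ => hγ.mem _, (IccExtend_left _ _).trans hγ.source,
    (IccExtend_right _ _).trans hγ.target⟩

end IsJLipPath

theorem isCompact_setOf_isJLipPath [ProperSpace E] (hopen : IsOpen Ω)
    (hfr : (frontier Ω).Nonempty) (hx : x ∈ Ω) (y : E) (L : ℝ) :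
    IsCompact {γ | IsJLipPath Ω x y L γ} := by
  have hpos : ∀ {z}, z ∈ Ω → 0 < infDist z (frontier Ω) := infDist_frontier_pos hopen hfr
  have hset : {γ | IsJLipPath Ω x y L γ} = univ.pi (fun _ => {z ∈ Ω | jDist Ω x z ≤ L}) ∩
      ({γ | γ 0 = x} ∩ {γ | γ 1 = y} ∩ ⋂ (s : unitInterval) (t : unitInterval),
        {γ | dist (γ s) (γ t) ≤ min (infDist (γ s) (frontier Ω)) (infDist (γ t) (frontier Ω)) *
          (Real.exp (L * dist s t) - 1)}) := by
    ext γ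
    simp only [mem_inter_iff, mem_iInter, mem_univ_pi]
    exact ⟨fun hγ => ⟨fun t => ⟨hγ.mem t, hγ.jDist_source_le t⟩, ⟨hγ.source, hγ.target⟩,
        fun s t => (jDist_le_iff (hpos (hγ.mem s)) (hpos (hγ.mem t))).1 (hγ.jDist_le s t)⟩,
      fun ⟨hball, ⟨h0, h1⟩, hd⟩ => ⟨fun t => (hball t).1, h0, h1,
        fun s t => (jDist_le_iff (hpos (hball s).1) (hpos (hball t).1)).2 (hd s t)⟩⟩
  have hinf (t : unitInterval) :
      Continuous fun γ : unitInterval → E => infDist (γ t) (frontier Ω) :=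
    (continuous_infDist_pt _).comp (continuous_apply t)
  rw [hset]
  refine (isCompact_univ_pi fun _ => isCompact_setOf_jDist_le hopen hfr hx L).inter_right ?_
  refine ((isClosed_eq (continuous_apply 0) continuous_const).inter
    (isClosed_eq (continuous_apply 1) continuous_const)).inter ?_
  exact isClosed_iInter fun s => isClosed_iInter fun t => isClosed_le
    ((continuous_apply s).dist (continuous_apply t))
    (((hinf s).min (hinf t)).mul continuous_const)

theorem exists_isJLipPath_of_forall_gt [ProperSpace E] (hopen : IsOpen Ω)
    (hfr : (frontier Ω).Nonempty) (hx : x ∈ Ω) (h : ∀ L' > L, ∃ γ, IsJLipPath Ω x y L' γ) :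
    ∃ γ, IsJLipPath Ω x y L γ := by
  have hcompact (L' : Ioi L) := isCompact_setOf_isJLipPath hopen hfr hx y L'
  have hmono : Monotone fun L' : Ioi L => {γ | IsJLipPath Ω x y L' γ} :=
    fun _ _ hle _ hγ => hγ.mono hle
  obtain ⟨γ, hγ⟩ := IsCompact.nonempty_iInter_of_directed_nonempty_isCompact_isClosed _
    hmono.directed_ge (fun L' => h L' L'.2) hcompact fun L' => (hcompact L').isClosed
  rw [mem_iInter] at hγ
  obtain ⟨L₀, hL₀⟩ := exists_gt L
  refine ⟨γ, { hγ ⟨L₀, hL₀⟩ with jDist_le := fun s t => ?_ }⟩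
  have hlim : Tendsto (fun L' => L' * dist s t) (𝓝[>] L) (𝓝 (L * dist s t)) :=
    (tendsto_id.mul_const _).mono_left nhdsWithin_le_nhds
  exact ge_of_tendsto hlim <|
    eventually_mem_nhdsWithin.mono fun L' hL' => (hγ ⟨L', hL'⟩).jDist_le s t

end JLipPath

theorem IsRectPath.exists_trans {Ω : Set E} {x y z : E} {f g : ℝ → E}
    (hf : IsRectPath Ω x y f) (hg : IsRectPath Ω y z g) : ∃ h, IsRectPath Ω x z h := by
  obtain ⟨⟨K, hK⟩, hfm, hf0, hf1⟩ := hf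
  obtain ⟨⟨L, hL⟩, hgm, hg0, hg1⟩ := hg
  have hfst : LipschitzWith _ fun t : ℝ => min (2 * t) 1 :=
    (lipschitzWith_smul (2 : ℝ)).min_const 1
  have hsnd : LipschitzWith _ fun t : ℝ => max (2 * t - 1) 0 :=
    ((lipschitzWith_smul (2 : ℝ)).sub (LipschitzWith.const 1)).max_const 0
  have hfst_maps : MapsTo (fun t : ℝ => min (2 * t) 1) (Icc 0 1) (Icc 0 1) := fun t ht =>
    ⟨le_min (by linarith [ht.1]) zero_le_one, min_le_right _ _⟩
  have hsnd_maps : MapsTo (fun t : ℝ => max (2 * t - 1) 0) (Icc 0 1) (Icc 0 1) := fun t ht =>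
    ⟨le_max_right _ _, max_le (by linarith [ht.2]) zero_le_one⟩
  have hlip := ((hK.comp hfst.lipschitzOnWith hfst_maps).add
    (hL.comp hsnd.lipschitzOnWith hsnd_maps)).sub (LipschitzWith.const y).lipschitzOnWith
  refine ⟨fun t => f (min (2 * t) 1) + g (max (2 * t - 1) 0) - y, ⟨_, hlip⟩, fun t ht => ?_, ?_, ?_⟩
  · rcases le_total t (1 / 2) with h | h
    · simpa only [max_eq_right (show 2 * t - 1 ≤ 0 by linarith), hg0, add_sub_cancel_right]
        using hfm (hfst_maps ht)
    · simpa only [min_eq_right (show 1 ≤ 2 * t by linarith), hf1, add_sub_cancel_left]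
        using hgm (hsnd_maps ht)
  · simp [hf0, hg0]
  · norm_num [hf1, hg1]

variable [NormedSpace ℝ E]

/-- The quasihyperbolic speed of a path, i.e. the integrand of `qhLength`. -/
noncomputable def qhSpeed (Ω : Set E) (γ : ℝ → E) (t : ℝ) : ℝ :=
  ‖deriv γ t‖ / infDist (γ t) (frontier Ω)

section Length

variable {Ω : Set E} {σ : ℝ → E} {K : ℝ≥0} {a b : ℝ}

theorem qhSpeed_nonneg (Ω : Set E) (σ : ℝ → E) (t : ℝ) : 0 ≤ qhSpeed Ω σ t :=
  div_nonneg (norm_nonneg _) infDist_nonneg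

theorem qhLength_nonneg (Ω : Set E) (σ : ℝ → E) : 0 ≤ qhLength Ω σ :=
  intervalIntegral.integral_nonneg zero_le_one fun t _ => qhSpeed_nonneg Ω σ t

theorem integrableOn_qhSpeed [CompleteSpace E] (hopen : IsOpen Ω) (hfr : (frontier Ω).Nonempty)
    (hσ : LipschitzOnWith K σ (Icc a b)) (hm : MapsTo σ (Icc a b) Ω) :
    IntegrableOn (qhSpeed Ω σ) (Icc a b) := by
  have hinv : ContinuousOn (fun t => (infDist (σ t) (frontier Ω))⁻¹) (Icc a b) :=
    ((continuous_infDist_pt _).comp_continuousOn hσ.continuousOn).inv₀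
      fun t ht => (infDist_frontier_pos hopen hfr (hm ht)).ne'
  have hbound : ∀ᵐ t ∂(volume.restrict (Icc a b)), ‖‖deriv σ t‖‖ ≤ K := by
    rw [← restrict_Ioo_eq_restrict_Icc]
    filter_upwards [self_mem_ae_restrict measurableSet_Ioo] with t ht
    rw [norm_norm]
    exact norm_deriv_le_of_lipschitzOn (Icc_mem_nhds ht.1 ht.2) hσ
  have hmul := (hinv.integrableOn_compact (μ := volume) isCompact_Icc).bdd_mul
    (stronglyMeasurable_deriv σ).norm.aestronglyMeasurable hbound
  exact hmul.congr (.of_forall fun t => (div_eq_mul_inv _ _).symm)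

theorem abs_deriv_log_add_dist_le {p : E} {t : ℝ} (hp : 0 < infDist p (frontier Ω))
    (ht : 0 < infDist (σ t) (frontier Ω)) (hσ : DifferentiableAt ℝ σ t)
    (hr : DifferentiableAt ℝ (fun s => infDist p (frontier Ω) + dist (σ s) p) t) :
    |deriv (fun s => Real.log (infDist p (frontier Ω) + dist (σ s) p)) t| ≤ qhSpeed Ω σ t := by
  have hpos : 0 < infDist p (frontier Ω) + dist (σ t) p := by positivity
  have hnum : |deriv (fun s => infDist p (frontier Ω) + dist (σ s) p) t| ≤ ‖deriv σ t‖ := by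
    refine norm_le_norm_of_hasDerivAt hr.hasDerivAt hσ.hasDerivAt (Eventually.of_forall fun s => ?_)
    simpa [dist_eq_norm] using abs_norm_sub_norm_le (σ s - p) (σ t - p)
  have hden : infDist (σ t) (frontier Ω) ≤ infDist p (frontier Ω) + dist (σ t) p :=
    infDist_le_infDist_add_dist
  rw [(hr.hasDerivAt.log hpos.ne').deriv, abs_div, abs_of_pos hpos]
  exact div_le_div₀ (norm_nonneg _) hnum ht hden

variable [FiniteDimensional ℝ E]

theorem abs_log_add_dist_sub_le_integral_qhSpeed (hopen : IsOpen Ω) (hfr : (frontier Ω).Nonempty)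
    (hσ : LipschitzOnWith K σ (Icc a b)) (hm : MapsTo σ (Icc a b) Ω) (hab : a ≤ b) {p : E}
    (hp : p ∈ Ω) :
    |Real.log (infDist p (frontier Ω) + dist (σ b) p)
      - Real.log (infDist p (frontier Ω) + dist (σ a) p)| ≤ ∫ t in a..b, qhSpeed Ω σ t := by
  have hdp := infDist_frontier_pos hopen hfr hp
  have hr := ((LipschitzWith.const (infDist p (frontier Ω))).add
    (LipschitzWith.dist_left p)).comp_lipschitzOnWith hσ
  have hlog : LipschitzOnWith _
      (fun s => Real.log (infDist p (frontier Ω) + dist (σ s) p)) (uIcc a b) :=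
    uIcc_of_le hab ▸ (lipschitzOnWith_log_Ici (δ := ⟨_, hdp.le⟩) hdp).comp hr
      fun s _ => le_add_of_nonneg_right dist_nonneg
  rw [← hlog.absolutelyContinuousOnInterval.integral_deriv_eq_sub, ← Real.norm_eq_abs]
  refine intervalIntegral.norm_integral_le_of_norm_le hab ?_
    ((intervalIntegrable_iff_integrableOn_Icc_of_le hab).2 (integrableOn_qhSpeed hopen hfr hσ hm))
  filter_upwards [hr.ae_differentiableWithinAt_of_mem (μ := volume),
    hσ.ae_differentiableWithinAt_of_mem (μ := volume), Measure.ae_ne volume b]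
    with t hrt hσt htb ht
  have htI : t ∈ Icc a b := Ioc_subset_Icc_self ht
  have hnhds : Icc a b ∈ 𝓝 t := Icc_mem_nhds ht.1 (lt_of_le_of_ne ht.2 htb)
  exact abs_deriv_log_add_dist_le hdp (infDist_frontier_pos hopen hfr (hm htI))
    ((hσt htI).differentiableAt hnhds) ((hrt htI).differentiableAt hnhds)

theorem jDist_le_integral_qhSpeed (hopen : IsOpen Ω) (hfr : (frontier Ω).Nonempty)
    (hσ : LipschitzOnWith K σ (Icc a b)) (hm : MapsTo σ (Icc a b) Ω) (hab : a ≤ b) :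
    jDist Ω (σ a) (σ b) ≤ ∫ t in a..b, qhSpeed Ω σ t := by
  have ha : σ a ∈ Ω := hm (left_mem_Icc.2 hab)
  have hb : σ b ∈ Ω := hm (right_mem_Icc.2 hab)
  have hlog : ∀ d > 0, Real.log (1 + dist (σ a) (σ b) / d)
      = Real.log (d + dist (σ a) (σ b)) - Real.log d := fun d hd => by
    rw [← Real.log_div (by positivity) hd.ne', add_div, div_self hd.ne']
  rcases min_choice (infDist (σ a) (frontier Ω)) (infDist (σ b) (frontier Ω)) with hmin | hmin
  · have h := abs_log_add_dist_sub_le_integral_qhSpeed hopen hfr hσ hm hab ha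
    rw [dist_self, add_zero, dist_comm] at h
    rw [jDist, hmin, hlog _ (infDist_frontier_pos hopen hfr ha)]
    exact (le_abs_self _).trans h
  · have h := abs_log_add_dist_sub_le_integral_qhSpeed hopen hfr hσ hm hab hb
    rw [dist_self, add_zero, abs_sub_comm] at h
    rw [jDist, hmin, hlog _ (infDist_frontier_pos hopen hfr hb)]
    exact (le_abs_self _).trans h

theorem jDist_le_abs_integral_qhSpeed_sub (hopen : IsOpen Ω) (hfr : (frontier Ω).Nonempty)
    (hσ : LipschitzOnWith K σ (Icc a b)) (hm : MapsTo σ (Icc a b) Ω) {u v : ℝ} (hu : u ∈ Icc a b)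
    (hv : v ∈ Icc a b) :
    jDist Ω (σ u) (σ v) ≤ |(∫ t in a..u, qhSpeed Ω σ t) - ∫ t in a..v, qhSpeed Ω σ t| := by
  wlog huv : u ≤ v generalizing u v
  · rw [jDist_comm, abs_sub_comm]
    exact this hv hu (le_of_not_ge huv)
  have hint : ∀ w ∈ Icc a b, IntervalIntegrable (qhSpeed Ω σ) volume a w := fun w hw =>
    (intervalIntegrable_iff_integrableOn_Icc_of_le hw.1).2
      ((integrableOn_qhSpeed hopen hfr hσ hm).mono_set (Icc_subset_Icc_right hw.2))
  have hsub : Icc u v ⊆ Icc a b := Icc_subset_Icc hu.1 hv.2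
  rw [abs_sub_comm, intervalIntegral.integral_interval_sub_left (hint v hv) (hint u hu)]
  exact (jDist_le_integral_qhSpeed hopen hfr (hσ.mono hsub) (hm.mono_left hsub) huv).trans
    (le_abs_self _)

end Length

section Connecting

variable {Ω : Set E} {x y : E}

theorem isRectPath_lineMap (h : segment ℝ x y ⊆ Ω) :
    IsRectPath Ω x y (AffineMap.lineMap x y) := by
  refine ⟨⟨_, (lipschitzWith_lineMap x y).lipschitzOnWith⟩, ?_, by simp, by simp⟩
  rw [mapsTo_iff_image_subset, ← segment_eq_image_lineMap]
  exact h

theorem exists_isRectPath (hopen : IsOpen Ω) (hconn : IsPreconnected Ω) (hx : x ∈ Ω)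
    (hy : y ∈ Ω) : ∃ γ, IsRectPath Ω x y γ := by
  refine hconn.induction₂' (fun x y => ∃ γ, IsRectPath Ω x y γ) (fun z hz => ?_)
    (fun _ _ _ _ _ _ ⟨_, hf⟩ ⟨_, hg⟩ => hf.exists_trans hg) hx hy
  obtain ⟨r, hr, hball⟩ := Metric.isOpen_iff.1 hopen z hz
  have hseg : ∀ u ∈ ball z r, ∀ v ∈ ball z r, ∃ γ, IsRectPath Ω u v γ := fun u hu v hv =>
    ⟨_, isRectPath_lineMap (((convex_ball z r).segment_subset hu hv).trans hball)⟩
  filter_upwards [mem_nhdsWithin_of_mem_nhds (ball_mem_nhds z hr)] with w hw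
  exact ⟨hseg z (mem_ball_self hr) w hw, hseg w hw z (mem_ball_self hr)⟩

end Connecting

section Reparametrization

variable {Ω : Set E} {x y : E} {L : ℝ}

theorem IsRectPath.exists_isJLipPath [FiniteDimensional ℝ E] {σ : ℝ → E} (hopen : IsOpen Ω)
    (hfr : (frontier Ω).Nonempty) (hσ : IsRectPath Ω x y σ) :
    ∃ γ, IsJLipPath Ω x y (qhLength Ω σ) γ := by
  obtain ⟨⟨K, hK⟩, hm, h0, h1⟩ := hσ
  let φ : ℝ → ℝ := fun u => ∫ t in 0..u, qhSpeed Ω σ t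
  have hφ0 : φ 0 = 0 := intervalIntegral.integral_same
  have hφ1 : φ 1 = qhLength Ω σ := rfl
  have hφ : ContinuousOn φ (Icc 0 1) := by
    have hint := integrableOn_qhSpeed hopen hfr hK hm
    rw [← uIcc_of_le zero_le_one] at hint ⊢
    exact intervalIntegral.continuousOn_primitive_interval hint
  have hj : ∀ {u v}, u ∈ Icc (0 : ℝ) 1 → v ∈ Icc (0 : ℝ) 1 →
      jDist Ω (σ u) (σ v) ≤ |φ u - φ v| :=
    jDist_le_abs_integral_qhSpeed_sub hopen hfr hK hm
  have hsurj : ∀ s : unitInterval, ∃ u ∈ Icc (0 : ℝ) 1, φ u = qhLength Ω σ * s := fun s =>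
    intermediate_value_Icc zero_le_one hφ <| by
      rw [hφ0, hφ1]
      exact ⟨mul_nonneg (qhLength_nonneg Ω σ) s.2.1,
        mul_le_of_le_one_right (qhLength_nonneg Ω σ) s.2.2⟩
  choose τ hτ hφτ using hsurj
  have heq : ∀ {u v}, u ∈ Icc (0 : ℝ) 1 → v ∈ Icc (0 : ℝ) 1 → φ u = φ v → σ u = σ v :=
    fun hu hv huv => eq_of_jDist_le_zero (infDist_frontier_pos hopen hfr (hm hu))
      (infDist_frontier_pos hopen hfr (hm hv)) ((hj hu hv).trans_eq (by simp [huv]))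
  refine ⟨fun s => σ (τ s), fun s => hm (hτ s), ?_, ?_, fun s t => ?_⟩
  · exact (heq (hτ 0) (by simp) (by simp [hφτ, hφ0])).trans h0
  · exact (heq (hτ 1) (by simp) (by simp [hφτ, hφ1])).trans h1
  · calc jDist Ω (σ (τ s)) (σ (τ t)) ≤ |φ (τ s) - φ (τ t)| := hj (hτ s) (hτ t)
      _ = qhLength Ω σ * dist s t := by
        rw [hφτ, hφτ, ← mul_sub, abs_mul, abs_of_nonneg (qhLength_nonneg Ω σ), Subtype.dist_eq,
          Real.dist_eq]

namespace IsJLipPath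

variable {γ : unitInterval → E}

theorem qhSpeed_IccExtend_le (hopen : IsOpen Ω) (hfr : (frontier Ω).Nonempty)
    (hγ : IsJLipPath Ω x y L γ) {t : ℝ} (ht : t ∈ Ioo 0 1) :
    qhSpeed Ω (IccExtend zero_le_one γ) t ≤ L := by
  have hpos : ∀ s, 0 < infDist (γ s) (frontier Ω) := fun s =>
    infDist_frontier_pos hopen hfr (hγ.mem s)
  set σ := IccExtend zero_le_one γ
  set d := infDist (σ t) (frontier Ω)
  have hd : 0 < d := hpos _
  rw [qhSpeed, div_le_iff₀ hd]
  by_cases hσ : DifferentiableAt ℝ σ t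
  · have hg : HasDerivAt (fun s => d * (Real.exp (L * (s - t)) - 1)) (L * d) t := by
      simpa [mul_comm] using
        (((((hasDerivAt_id t).sub_const t).const_mul L).exp).sub_const 1).const_mul d
    have hbound : ∀ᶠ s in 𝓝[>] t,
        ‖σ s - σ t‖ ≤ ‖d * (Real.exp (L * (s - t)) - 1) - d * (Real.exp (L * (t - t)) - 1)‖ := by
      filter_upwards [Ioo_mem_nhdsGT ht.2] with s hs
      have hst : 0 ≤ L * (s - t) := mul_nonneg hγ.nonneg (sub_nonneg.2 hs.1.le)
      have hsI : s ∈ Icc (0 : ℝ) 1 := ⟨ht.1.le.trans hs.1.le, hs.2.le⟩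
      have htI : t ∈ Icc (0 : ℝ) 1 := Ioo_subset_Icc_self ht
      have hj : jDist Ω (σ s) (σ t) ≤ L * (s - t) := by
        simpa only [σ, IccExtend_of_mem _ _ hsI, IccExtend_of_mem _ _ htI, Subtype.dist_eq,
          Real.dist_eq, abs_of_pos (sub_pos.2 hs.1)] using hγ.jDist_le ⟨s, hsI⟩ ⟨t, htI⟩
      have hdist := dist_le_of_jDist_le (hpos _) hd hst hj
      rw [← dist_eq_norm, sub_self, mul_zero, Real.exp_zero, sub_self, mul_zero, sub_zero]
      exact hdist.trans (Real.le_norm_self _)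
    calc ‖deriv σ t‖ ≤ ‖L * d‖ := norm_le_norm_of_hasDerivAt hσ.hasDerivAt hg hbound
      _ = L * d := Real.norm_of_nonneg (mul_nonneg hγ.nonneg hd.le)
  · rw [deriv_zero_of_not_differentiableAt hσ, norm_zero]
    exact mul_nonneg hγ.nonneg hd.le

theorem qhLength_IccExtend_le [CompleteSpace E] (hopen : IsOpen Ω) (hfr : (frontier Ω).Nonempty)
    (hγ : IsJLipPath Ω x y L γ) : qhLength Ω (IccExtend zero_le_one γ) ≤ L := by
  obtain ⟨⟨K, hK⟩, hm, -, -⟩ := hγ.isRectPath_IccExtend hopen hfr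
  calc qhLength Ω (IccExtend zero_le_one γ) ≤ ∫ _ in (0 : ℝ)..1, L :=
        intervalIntegral.integral_mono_on_of_le_Ioo zero_le_one
          ((intervalIntegrable_iff_integrableOn_Icc_of_le zero_le_one).2
            (integrableOn_qhSpeed hopen hfr hK hm))
          intervalIntegrable_const fun t ht => hγ.qhSpeed_IccExtend_le hopen hfr ht
    _ = L := by simp

end IsJLipPath

end Reparametrization

section Geodesic

variable {Ω : Set E} {x y : E}

theorem qhDist_le_qhLength {γ : ℝ → E} (hγ : IsRectPath Ω x y γ) :
    qhDist Ω x y ≤ qhLength Ω γ :=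
  csInf_le ⟨0, forall_mem_image.2 fun σ _ => qhLength_nonneg Ω σ⟩ ⟨γ, hγ, rfl⟩

theorem exists_isRectPath_qhLength_lt (hopen : IsOpen Ω) (hconn : IsPreconnected Ω) (hx : x ∈ Ω)
    (hy : y ∈ Ω) {L : ℝ} (hL : qhDist Ω x y < L) : ∃ σ, IsRectPath Ω x y σ ∧ qhLength Ω σ < L := by
  have hne : {σ | IsRectPath Ω x y σ}.Nonempty := exists_isRectPath hopen hconn hx hy
  simpa using exists_lt_of_csInf_lt (hne.image _) hL

theorem qh_geodesic_exists_general [FiniteDimensional ℝ E] (hopen : IsOpen Ω)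
    (hconn : IsPreconnected Ω) (hproper : Ω ≠ univ) (hx : x ∈ Ω) (hy : y ∈ Ω) :
    ∃ γ : ℝ → E, IsRectPath Ω x y γ ∧ qhLength Ω γ = qhDist Ω x y := by
  have : ProperSpace E := FiniteDimensional.proper_real E
  have hfr : (frontier Ω).Nonempty := nonempty_frontier_iff.2 ⟨⟨x, hx⟩, hproper⟩
  have happrox : ∀ L > qhDist Ω x y, ∃ γ, IsJLipPath Ω x y L γ := fun L hL => by
    obtain ⟨σ, hσ, hlt⟩ := exists_isRectPath_qhLength_lt hopen hconn hx hy hL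
    obtain ⟨γ, hγ⟩ := hσ.exists_isJLipPath hopen hfr
    exact ⟨γ, hγ.mono hlt.le⟩
  obtain ⟨γ, hγ⟩ := exists_isJLipPath_of_forall_gt hopen hfr hx happrox
  have hrect := hγ.isRectPath_IccExtend hopen hfr
  exact ⟨_, hrect, (hγ.qhLength_IccExtend_le hopen hfr).antisymm (qhDist_le_qhLength hrect)⟩

end Geodesic

/-- existence of quasihyperbolic geodesics in proper subdomains of `ℝⁿ`. -/
theorem qh_geodesic_exists (n : ℕ) (hn : 2 ≤ n) (Ω : Set (EuclideanSpace ℝ (Fin n)))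
    (hopen : IsOpen Ω) (hconn : IsConnected Ω) (hproper : Ω ≠ univ)
    (x y : EuclideanSpace ℝ (Fin n)) (hx : x ∈ Ω) (hy : y ∈ Ω) :
    ∃ γ : ℝ → EuclideanSpace ℝ (Fin n),
      IsRectPath Ω x y γ ∧ qhLength Ω γ = qhDist Ω x y := by
  exact qh_geodesic_exists_general hopen hconn.isPreconnected hproper hx hy
end

section
/- Let n ≥ 2, Ω = ℝⁿ \ {0}, and x ∈ Ω. Then the quasihyperbolic ball B_k(x,r) is strictly starlike with respect to x for every r ∈ (0, κ], and it is not starlike with respect to x for every r > κ, where κ ≈ 2.83297 is the unique solution p ∈ [1, π] of cos√(p²−1) + √(p²−1)·sin√(p²−1) = e⁻¹. -/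
open Set Metric MeasureTheory

/-!
Identify a plane through `0` and `x` with `ℂ` so that `x` becomes `1`. There `exp` turns the
Euclidean length element into `|dz| / |z|`, so `k (x, y)` is the norm of the logarithm of `y`; in
the whole space this is the norm of `polarLog x y`, the angle and the logarithm of the modulus
being the only data that matter.

Along a ray from `1`, the squared norm of the logarithm at `w = exp (L + iθ)` has derivative a
positive multiple of `L (e ^ L - cos θ) + θ sin θ`. For `|θ| ≥ π / 2` the term `L e ^ L` is
smallest at `L = -1`, and on the disc `L² + θ² ≤ κ²` the remaining `θ sin θ - L cos θ` is at least
`e⁻¹`, with equality at `(L, θ) = (-1, √(κ² - 1))`: this is the equation for `κ`. Hence rays leave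
every ball of radius `r ≤ κ` once, whereas for `κ < r ≤ π` the ray through
`exp (-1 + i √(r² - 1))` re-enters the ball there. For `r > π` the ball contains `-x`, opposite to
`x` with respect to the puncture.
-/

namespace PuncturedSpace

open Real

section Prelim

open Filter Topology

theorem strictMonoOn_Icc_of_deriv_nonneg_of_exists_ne {f : ℝ → ℝ} {a b : ℝ}
    (hf : ContinuousOn f (Icc a b)) (hd : DifferentiableOn ℝ f (Ioo a b))
    (hnonneg : ∀ t ∈ Ioo a b, 0 ≤ deriv f t)
    (hne : ∀ c ∈ Icc a b, ∀ d ∈ Icc a b, c < d → ∃ t ∈ Ioo c d, deriv f t ≠ 0) :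
    StrictMonoOn f (Icc a b) := by
  have hmono : MonotoneOn f (Icc a b) :=
    monotoneOn_of_deriv_nonneg (convex_Icc a b) hf (by rwa [interior_Icc])
      (by rwa [interior_Icc])
  intro c hc d hd hcd
  refine (hmono hc hd hcd.le).lt_of_ne fun heq => ?_
  obtain ⟨t, ht, hne⟩ := hne c hc d hd hcd
  have hconst : f =ᶠ[𝓝 t] fun _ => f c := by
    filter_upwards [Ioo_mem_nhds ht.1 ht.2] with u hu
    have huI : u ∈ Icc a b := ⟨hc.1.trans hu.1.le, hu.2.le.trans hd.2⟩
    exact (heq ▸ hmono huI hd hu.2.le).antisymm (hmono hc huI hu.1.le)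
  exact hne (by rw [hconst.deriv_eq, deriv_const])

theorem eventually_nhdsGT_lt_of_hasDerivAt_neg {f : ℝ → ℝ} {f' a : ℝ} (h : HasDerivAt f f' a)
    (hf' : f' < 0) : ∀ᶠ t in 𝓝[>] a, f t < f a := by
  filter_upwards [(h.tendsto_slope.mono_left (nhdsGT_le_nhdsNE a)).eventually_lt_const hf',
    self_mem_nhdsWithin] with t hslope ht
  rw [slope_def_field, div_lt_iff₀ (sub_pos.2 ht), zero_mul] at hslope
  exact sub_neg.1 hslope

theorem exists_norm_add_smul_ne {F : Type*} [NormedAddCommGroup F] [NormedSpace ℝ F]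
    [StrictConvexSpace ℝ F] {v : F} (hv : v ≠ 0) (u : F) (ρ : ℝ) {c d : ℝ} (hcd : c < d) :
    ∃ t ∈ Ioo c d, ‖u + t • v‖ ≠ ρ := by
  by_contra! h
  obtain ⟨a, hca, had⟩ := exists_between hcd
  obtain ⟨b, hab, hbd⟩ := exists_between had
  have ha := h a ⟨hca, had⟩
  have hb := h b ⟨hca.trans hab, hbd⟩
  have hm := h ((a + b) / 2) ⟨by linarith, by linarith⟩
  have hsum : u + a • v + (u + b • v) = (2 : ℝ) • (u + ((a + b) / 2) • v) := by module
  have heq : u + a • v = u + b • v := eq_of_norm_eq_of_norm_add_eq (ha.trans hb.symm) <| by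
    rw [hsum, norm_smul, hm, ha, hb, Real.norm_two, two_mul]
  exact hab.ne (smul_left_injective ℝ hv (add_left_cancel heq))

theorem sin_le_sin_add_cos_mul_sub {a b : ℝ} (ha : a ∈ Icc 0 π) (hb : b ∈ Icc 0 π) :
    sin b ≤ sin a + cos a * (b - a) := by
  have hconc := strictConcaveOn_sin_Icc.concaveOn
  rcases lt_trichotomy a b with h | rfl | h
  · have := hconc.slope_le_of_hasDerivAt ha hb h (hasDerivAt_sin a)
    rw [slope_def_field, div_le_iff₀ (sub_pos.2 h)] at this
    linarith
  · simp
  · have := hconc.le_slope_of_hasDerivAt hb ha h (hasDerivAt_sin a)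
    rw [slope_def_field, le_div_iff₀ (sub_pos.2 h)] at this
    linarith

theorem exists_mul_sin_eq_and_le_mul_cos {l θ ρ : ℝ} (hρ : 0 < ρ) (hθ : 0 ≤ θ)
    (h : l ^ 2 + θ ^ 2 ≤ ρ ^ 2) : ∃ φ ∈ Icc 0 (π / 2), ρ * sin φ = θ ∧ l ≤ ρ * cos φ := by
  have hθρ : θ ≤ ρ := by nlinarith
  have hθ₀ : 0 ≤ θ / ρ := div_nonneg hθ hρ.le
  have hsin : ρ * sin (arcsin (θ / ρ)) = θ := by
    rw [sin_arcsin (by linarith) ((div_le_one hρ).2 hθρ), mul_div_cancel₀ _ hρ.ne']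
  refine ⟨arcsin (θ / ρ), ⟨arcsin_nonneg.2 hθ₀, arcsin_le_pi_div_two _⟩, hsin, ?_⟩
  refine le_of_sq_le_sq ?_ (mul_nonneg hρ.le (cos_arcsin_nonneg _))
  rw [mul_pow, cos_sq']
  linarith [congrArg (· ^ 2) hsin, mul_pow ρ (sin (arcsin (θ / ρ))) 2]

theorem exists_pos_add_smul_mem_frontier {F : Type*} [NormedAddCommGroup F] [NormedSpace ℝ F]
    {G : Set F} {x v : F} (hopen : IsOpen G) (hbdd : Bornology.IsBounded G) (hx : x ∈ G)
    (hv : v ≠ 0) : ∃ t : ℝ, 0 < t ∧ x + t • v ∈ frontier G := by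
  have hcont : Continuous fun t : ℝ => x + |t| • v := by fun_prop
  have hne_univ : (fun t : ℝ => x + |t| • v) ⁻¹' G ≠ univ := by
    obtain ⟨R, hR⟩ := hbdd.subset_ball x
    have hR₀ : 0 < R := pos_of_mem_ball (hR hx)
    refine (ne_univ_iff_exists_notMem _).2 ⟨R / ‖v‖, fun hmem => ?_⟩
    have := hR hmem
    have habs : |R / ‖v‖| * ‖v‖ = R := by
      rw [abs_of_nonneg (by positivity), div_mul_cancel₀ _ (norm_ne_zero_iff.2 hv)]
    simp [norm_smul, habs] at this
  obtain ⟨t, ht⟩ := nonempty_frontier_iff.2 ⟨⟨0, by simpa using hx⟩, hne_univ⟩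
  have htG : x + |t| • v ∈ frontier G := hcont.frontier_preimage_subset G ht
  refine ⟨|t|, abs_pos.2 ?_, htG⟩
  rintro rfl
  rw [hopen.frontier_eq] at htG
  exact htG.2 (by simpa using hx)

theorem strictlyStarlike_of_openSegment_subset {F : Type*} [NormedAddCommGroup F]
    [NormedSpace ℝ F] {G : Set F} {x : F} (hopen : IsOpen G) (hbdd : Bornology.IsBounded G)
    (hx : x ∈ G) (h : ∀ y ∈ closure G, openSegment ℝ x y ⊆ G) : StrictlyStarlike G x := by
  refine ⟨(starConvex_iff_openSegment_subset hx).2 fun y hy => h y (subset_closure hy),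
    fun v hv => ?_⟩
  have hinside {s t : ℝ} (hs : 0 < s) (hst : s < t) (ht : x + t • v ∈ frontier G) :
      x + s • v ∉ frontier G := by
    rw [hopen.frontier_eq]
    refine fun hsG => hsG.2 (h _ (frontier_subset_closure ht) ?_)
    rw [openSegment_eq_image']
    have ht₀ : 0 < t := hs.trans hst
    refine ⟨s / t, ⟨by positivity, (div_lt_one ht₀).2 hst⟩, ?_⟩
    simp only [add_sub_cancel_left, smul_smul, div_mul_cancel₀ _ ht₀.ne']
  obtain ⟨t, ht₀, htG⟩ := exists_pos_add_smul_mem_frontier hopen hbdd hx hv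
  refine ⟨x + t • v, ⟨htG, t, ht₀, rfl⟩, ?_⟩
  rintro _ ⟨hsG, s, hs, rfl⟩
  rcases lt_trichotomy s t with hst | rfl | hts
  · exact absurd hsG (hinside hs hst htG)
  · rfl
  · exact absurd htG (hinside ht₀ hts hsG)

end Prelim

section UpperGradient

open Filter Topology
open scoped NNReal

variable {E F : Type*} [NormedAddCommGroup E] [NormedAddCommGroup F]

/-- The local Lipschitz constant of `f` at every `z ∈ Ω` is at most `ρ z`, so that `ρ` is an upper
gradient of `f` along Lipschitz curves in `Ω`. -/
def HasLocalLipBoundOn (f : E → F) (ρ : E → ℝ) (Ω : Set E) : Prop :=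
  ∀ z ∈ Ω, ∀ C > ρ z, ∀ᶠ p in 𝓝 (z, z), ‖f p.1 - f p.2‖ ≤ C * ‖p.1 - p.2‖

theorem locallyLipschitzOn_comp_of_lipschitzOnWith {X Y Z : Type*} [PseudoEMetricSpace X]
    [PseudoEMetricSpace Y] [PseudoEMetricSpace Z] {f : Y → Z} {g : X → Y} {s : Set X} {t : Set Y}
    {K : ℝ≥0} (hf : LocallyLipschitzOn t f) (hg : LipschitzOnWith K g s) (hmaps : MapsTo g s t) :
    LocallyLipschitzOn s (f ∘ g) := by
  intro x hx
  obtain ⟨C, u, hu, hfu⟩ := hf (hmaps hx)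
  exact ⟨C * K, s ∩ g ⁻¹' u, inter_mem self_mem_nhdsWithin
      ((hg.continuousOn x hx).tendsto_nhdsWithin hmaps hu),
    hfu.comp (hg.mono inter_subset_left) fun y hy => hy.2⟩

theorem intervalIntegrable_norm_deriv_mul [NormedSpace ℝ E] [CompleteSpace E] {γ : ℝ → E}
    {g : ℝ → ℝ} {a b : ℝ} {K : ℝ≥0} (hγ : LipschitzOnWith K γ (Icc a b))
    (hg : ContinuousOn g (Icc a b)) (hab : a ≤ b) :
    IntervalIntegrable (fun t => ‖deriv γ t‖ * g t) volume a b := by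
  have hderiv : IntervalIntegrable (fun t => ‖deriv γ t‖) volume a b := by
    rw [intervalIntegrable_iff_integrableOn_Ioo_of_le hab]
    refine Measure.integrableOn_of_bounded (M := K) (by simp)
      (stronglyMeasurable_deriv γ).norm.aestronglyMeasurable ?_
    filter_upwards [ae_restrict_mem measurableSet_Ioo] with t ht
    rw [norm_norm]
    exact norm_deriv_le_of_lipschitzOn (Icc_mem_nhds ht.1 ht.2) hγ
  exact hderiv.mul_continuousOn (by rwa [uIcc_of_le hab])

namespace HasLocalLipBoundOn

variable {f : E → F} {ρ : E → ℝ} {Ω : Set E}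

theorem locallyLipschitzOn (hf : HasLocalLipBoundOn f ρ Ω) : LocallyLipschitzOn Ω f := by
  intro z hz
  have hfz := hf z hz (|ρ z| + 1) ((le_abs_self _).trans_lt (lt_add_one _))
  rw [nhds_prod_eq] at hfz
  obtain ⟨u, hu, hfu⟩ := mem_prod_self_iff.1 hfz
  refine ⟨⟨|ρ z| + 1, by positivity⟩, u, mem_nhdsWithin_of_mem_nhds hu,
    LipschitzOnWith.of_dist_le_mul fun p hp q hq => ?_⟩
  simp only [dist_eq_norm]
  exact hfu (mk_mem_prod hp hq)

theorem clm_comp [NormedSpace ℝ F] (hf : HasLocalLipBoundOn f ρ Ω) {G : Type*}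
    [NormedAddCommGroup G] [NormedSpace ℝ G] {φ : F →L[ℝ] G} (hφ : ‖φ‖ ≤ 1) :
    HasLocalLipBoundOn (φ ∘ f) ρ Ω := by
  intro z hz C hC
  filter_upwards [hf z hz C hC] with p hp
  rw [Function.comp_apply, Function.comp_apply, ← map_sub]
  exact (φ.le_of_opNorm_le hφ _).trans (by rwa [one_mul])

variable [NormedSpace ℝ E] [NormedSpace ℝ F]

theorem norm_deriv_comp_le (hf : HasLocalLipBoundOn f ρ Ω) {γ : ℝ → E} {t : ℝ} {v : E} {w : F}
    (ht : γ t ∈ Ω) (hγ : HasDerivAt γ v t) (hfγ : HasDerivAt (f ∘ γ) w t) :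
    ‖w‖ ≤ ‖v‖ * ρ (γ t) := by
  have hC : ∀ C > ρ (γ t), ‖w‖ ≤ ‖v‖ * C := by
    intro C hC
    refine le_of_tendsto_of_tendsto hfγ.tendsto_slope.norm (hγ.tendsto_slope.norm.mul_const C) ?_
    have hpair : Tendsto (fun s => (γ s, γ t)) (𝓝[≠] t) (𝓝 (γ t, γ t)) :=
      (hγ.continuousAt.prodMk continuousAt_const).tendsto.mono_left nhdsWithin_le_nhds
    filter_upwards [hpair.eventually (hf _ ht C hC)] with s hs
    rw [slope_def_module, slope_def_module, norm_smul, norm_smul, mul_assoc, mul_comm _ C]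
    gcongr
    exact hs
  refine le_of_tendsto_of_tendsto tendsto_const_nhds
    ((continuous_const.mul continuous_id).continuousWithinAt (s := Ioi (ρ (γ t)))) ?_
  filter_upwards [self_mem_nhdsWithin] with C hC'
  exact hC C hC'

variable [FiniteDimensional ℝ E] {γ : ℝ → E} {a b : ℝ} {K : ℝ≥0}

theorem abs_sub_le_integral {f : E → ℝ} (hf : HasLocalLipBoundOn f ρ Ω) (hρ : ContinuousOn ρ Ω)
    (hab : a ≤ b) (hγ : LipschitzOnWith K γ (Icc a b)) (hmaps : MapsTo γ (Icc a b) Ω) :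
    |f (γ b) - f (γ a)| ≤ ∫ t in a..b, ‖deriv γ t‖ * ρ (γ t) := by
  have := FiniteDimensional.complete ℝ E
  obtain ⟨L, hL⟩ := (locallyLipschitzOn_comp_of_lipschitzOnWith hf.locallyLipschitzOn hγ
    hmaps).exists_lipschitzOnWith_of_compact isCompact_Icc
  have hac : AbsolutelyContinuousOnInterval (f ∘ γ) a b :=
    LipschitzOnWith.absolutelyContinuousOnInterval (by rwa [uIcc_of_le hab])
  calc |f (γ b) - f (γ a)| = ‖∫ t in a..b, deriv (f ∘ γ) t‖ := by
        rw [hac.integral_deriv_eq_sub, Real.norm_eq_abs, Function.comp_apply, Function.comp_apply]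
    _ ≤ ∫ t in a..b, ‖deriv γ t‖ * ρ (γ t) := by
        refine intervalIntegral.norm_integral_le_of_norm_le hab ?_
          (intervalIntegrable_norm_deriv_mul hγ (hρ.comp hγ.continuousOn hmaps) hab)
        filter_upwards [hγ.ae_differentiableWithinAt_of_mem, hL.ae_differentiableWithinAt_of_mem,
          Measure.ae_ne volume b] with t hdγ hdf htb ht
        have hmem : t ∈ Icc a b := Ioc_subset_Icc_self ht
        have hnhds : Icc a b ∈ 𝓝 t := Icc_mem_nhds ht.1 (ht.2.lt_of_ne htb)
        exact hf.norm_deriv_comp_le (hmaps hmem)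
          ((hdγ hmem).differentiableAt hnhds).hasDerivAt
          ((hdf hmem).differentiableAt hnhds).hasDerivAt

theorem norm_sub_le_integral (hf : HasLocalLipBoundOn f ρ Ω) (hρ : ContinuousOn ρ Ω)
    (hab : a ≤ b) (hγ : LipschitzOnWith K γ (Icc a b)) (hmaps : MapsTo γ (Icc a b) Ω) :
    ‖f (γ b) - f (γ a)‖ ≤ ∫ t in a..b, ‖deriv γ t‖ * ρ (γ t) := by
  obtain ⟨φ, hφ, hφv⟩ := exists_dual_vector'' ℝ (f (γ b) - f (γ a))
  have := (hf.clm_comp hφ).abs_sub_le_integral hρ hab hγ hmaps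
  rw [Function.comp_apply, Function.comp_apply, ← map_sub, hφv] at this
  exact (le_abs_self _).trans this

end HasLocalLipBoundOn

end UpperGradient

section PolarLog

open InnerProductGeometry

variable {E : Type*} [NormedAddCommGroup E] [InnerProductSpace ℝ E]

theorem exists_ne_zero_inner_eq_zero_mem_span_pair (hE : 1 < Module.rank ℝ E) {x : E} (hx : x ≠ 0)
    (v : E) : ∃ w ≠ 0, inner ℝ x w = 0 ∧ v ∈ Submodule.span ℝ {x, w} := by
  obtain ⟨u, hu, hv⟩ : ∃ u, (∀ a : ℝ, a • x ≠ u) ∧ v ∈ Submodule.span ℝ {x, u} := by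
    by_cases hv : ∀ a : ℝ, a • x ≠ v
    · exact ⟨v, hv, Submodule.subset_span (by simp)⟩
    · push Not at hv
      obtain ⟨a, rfl⟩ := hv
      obtain ⟨u, hu⟩ := exists_linearIndependent_pair_of_one_lt_rank hE hx
      exact ⟨u, (LinearIndependent.pair_iff' hx).1 hu,
        Submodule.smul_mem _ a (Submodule.subset_span (by simp))⟩
  set c := inner ℝ x u / inner ℝ x x with hc
  refine ⟨u - c • x, sub_ne_zero.2 (hu c).symm, ?_, ?_⟩
  · rw [inner_sub_right, inner_smul_right, hc, div_mul_cancel₀ _ (inner_self_ne_zero.2 hx),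
      sub_self]
  · obtain ⟨a, b, rfl⟩ := Submodule.mem_span_pair.1 hv
    exact Submodule.mem_span_pair.2 ⟨a + b * c, b, by module⟩

theorem exists_isConformalMap_one_eq (hE : 1 < Module.rank ℝ E) {x : E} (hx : x ≠ 0) (v : E) :
    ∃ ψ : ℂ →L[ℝ] E, IsConformalMap ψ ∧ ψ 1 = x ∧ ∃ ζ, ψ ζ = v := by
  obtain ⟨w, hw, hxw, hv⟩ := exists_ne_zero_inner_eq_zero_mem_span_pair hE hx v
  obtain ⟨a, b, rfl⟩ := Submodule.mem_span_pair.1 hv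
  have hx' := norm_ne_zero_iff.2 hx
  have hw' := norm_ne_zero_iff.2 hw
  let ψ : ℂ →L[ℝ] E :=
    Complex.reCLM.smulRight x + Complex.imCLM.smulRight ((‖x‖ / ‖w‖) • w)
  have hψ (z : ℂ) : ψ z = z.re • x + z.im • (‖x‖ / ‖w‖) • w := rfl
  refine ⟨ψ, (isConformalMap_iff ψ).2 ⟨‖x‖ ^ 2, by positivity, fun y z => ?_⟩, by simp [hψ],
    ⟨a, b * ‖w‖ / ‖x‖⟩, ?_⟩
  · rw [hψ, hψ, Complex.inner]
    simp only [inner_add_left, inner_add_right, real_inner_smul_left, real_inner_smul_right, hxw,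
      real_inner_comm x w, real_inner_self_eq_norm_sq, Complex.mul_re, Complex.conj_re,
      Complex.conj_im]
    field_simp
    ring
  · rw [hψ, smul_smul]
    congr 2
    field_simp

theorem norm_apply_of_isConformalMap {F G : Type*} [NormedAddCommGroup F] [NormedSpace ℝ F]
    [NormedAddCommGroup G] [NormedSpace ℝ G] {ψ : F →L[ℝ] G} (hψ : IsConformalMap ψ) {u : F}
    (hu : ‖u‖ = 1) (z : F) : ‖ψ z‖ = ‖ψ u‖ * ‖z‖ := by
  obtain ⟨c, -, li, rfl⟩ := hψ
  simp [norm_smul, hu]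

theorem norm_log_sq (w : ℂ) : ‖Complex.log w‖ ^ 2 = Real.log ‖w‖ ^ 2 + w.arg ^ 2 := by
  rw [Complex.sq_norm, Complex.normSq_apply, Complex.log_re, Complex.log_im]
  ring

/-- The vector with coordinates `log (‖y‖ / ‖x‖)` and `∠ x y`, packed into `ℂ`. In a plane through
`0` identified with `ℂ` so that `x` becomes `1`, it is the logarithm of `y` up to the sign of the
argument. -/
noncomputable def polarLog (x y : E) : ℂ :=
  ⟨Real.log (‖y‖ / ‖x‖), angle x y⟩

theorem polarLog_self {x : E} (hx : x ≠ 0) : polarLog x x = 0 := by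
  simp [polarLog, Complex.ext_iff, hx]

theorem norm_polarLog_map {ψ : ℂ →L[ℝ] E} (hψ : IsConformalMap ψ) {w : ℂ} (hw : w ≠ 0) :
    ‖polarLog (ψ 1) (ψ w)‖ = ‖Complex.log w‖ := by
  have hψ₁ : ‖ψ 1‖ ≠ 0 := by simpa using hψ.injective.ne one_ne_zero
  have hlog : polarLog (ψ 1) (ψ w) = ⟨Real.log ‖w‖, |w.arg|⟩ := by
    rw [polarLog, norm_apply_of_isConformalMap hψ norm_one w, mul_div_cancel_left₀ _ hψ₁,
      hψ.preserves_angle, Complex.angle_one_left hw]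
  rw [← sq_eq_sq₀ (norm_nonneg _) (norm_nonneg _), hlog, norm_log_sq, Complex.sq_norm,
    Complex.normSq_mk, abs_mul_abs_self, sq, sq]

theorem norm_polarLog_sub_le {x y z : E} (hx : x ≠ 0) (hy : y ≠ 0) (hz : z ≠ 0) :
    ‖polarLog x z - polarLog x y‖ ≤ ‖polarLog y z‖ := by
  have hx' := norm_ne_zero_iff.2 hx
  have := norm_ne_zero_iff.2 hy
  have := norm_ne_zero_iff.2 hz
  have hre : (polarLog x z - polarLog x y).re = (polarLog y z).re := by
    simp only [polarLog, Complex.sub_re]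
    rw [← Real.log_div (by positivity) (by positivity), div_div_div_cancel_right₀ hx']
  have him : |(polarLog x z - polarLog x y).im| ≤ |(polarLog y z).im| := by
    simp only [polarLog, Complex.sub_im, abs_of_nonneg (angle_nonneg y z)]
    have hxy := angle_le_angle_add_angle x z y
    rw [angle_comm z y] at hxy
    exact abs_sub_le_iff.2 ⟨by linarith [angle_le_angle_add_angle x y z], by linarith⟩
  rw [← sq_le_sq₀ (norm_nonneg _) (norm_nonneg _), Complex.sq_norm, Complex.sq_norm,
    Complex.normSq_apply, Complex.normSq_apply, hre]
  linarith [sq_le_sq.2 him]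

theorem continuousOn_polarLog {x : E} (hx : x ≠ 0) : ContinuousOn (polarLog x) {0}ᶜ := by
  intro y hy
  have hangle : ContinuousAt (angle x) y :=
    (continuousAt_angle (x := (x, y)) hx hy).comp (f := fun y => (x, y)) (by fun_prop)
  have hlog : ContinuousAt (fun y : E => Real.log (‖y‖ / ‖x‖)) y :=
    ContinuousAt.log (by fun_prop) (div_ne_zero (norm_ne_zero_iff.2 hy) (norm_ne_zero_iff.2 hx))
  exact (Complex.equivRealProdCLM.symm.continuous.continuousAt.comp
    (hlog.prodMk hangle)).continuousWithinAt

theorem norm_polarLog_le (hE : 1 < Module.rank ℝ E) {x y : E} (hx : x ≠ 0)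
    (h : ‖y - x‖ / ‖x‖ ≤ 1 / 2) :
    ‖polarLog x y‖ ≤ ‖y - x‖ / ‖x‖ * (1 + ‖y - x‖ / ‖x‖) := by
  obtain ⟨ψ, hψ, rfl, ζ, hζ⟩ := exists_isConformalMap_one_eq hE hx (y - x)
  obtain rfl : y = ψ (1 + ζ) := by rw [map_add, hζ, add_sub_cancel]
  have hψ₁ : ‖ψ 1‖ ≠ 0 := norm_ne_zero_iff.2 hx
  rw [map_add, add_sub_cancel_left, norm_apply_of_isConformalMap hψ norm_one ζ,
    mul_div_cancel_left₀ _ hψ₁] at h ⊢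
  have hζ₁ : ‖ζ‖ < 1 := by linarith
  rw [← map_add, norm_polarLog_map hψ
    (Complex.slitPlane_ne_zero (Complex.mem_slitPlane_of_norm_lt_one hζ₁))]
  have hinv : (1 - ‖ζ‖)⁻¹ ≤ 2 := inv_le_of_inv_le₀ two_pos (by linarith)
  calc ‖Complex.log (1 + ζ)‖ ≤ ‖ζ‖ ^ 2 * (1 - ‖ζ‖)⁻¹ / 2 + ‖ζ‖ :=
        Complex.norm_log_one_add_le hζ₁
    _ ≤ ‖ζ‖ ^ 2 * 2 / 2 + ‖ζ‖ := by gcongr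
    _ = ‖ζ‖ * (1 + ‖ζ‖) := by ring

end PolarLog

section QhDist

open Filter Topology

variable {E : Type*} [NormedAddCommGroup E] [InnerProductSpace ℝ E]

theorem hasLocalLipBoundOn_polarLog (hE : 1 < Module.rank ℝ E) {x : E} (hx : x ≠ 0) :
    HasLocalLipBoundOn (polarLog x) (fun z => ‖z‖⁻¹) {0}ᶜ := by
  intro z hz C hC
  have hz' : ‖z‖ ≠ 0 := norm_ne_zero_iff.2 hz
  have hratio : Tendsto (fun p : E × E => ‖p.1 - p.2‖ / ‖p.2‖) (𝓝 (z, z)) (𝓝 0) := by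
    have : ContinuousAt (fun p : E × E => ‖p.1 - p.2‖ / ‖p.2‖) (z, z) := by
      fun_prop (disch := assumption)
    simpa using this.tendsto
  have hcoeff : Tendsto (fun p : E × E => ‖p.2‖⁻¹ * (1 + ‖p.1 - p.2‖ / ‖p.2‖)) (𝓝 (z, z))
      (𝓝 ‖z‖⁻¹) := by
    have : ContinuousAt (fun p : E × E => ‖p.2‖⁻¹) (z, z) := by fun_prop (disch := assumption)
    simpa using this.tendsto.mul (hratio.const_add 1)
  filter_upwards [hratio.eventually_le_const (u := 1 / 2) (by norm_num),
    hcoeff.eventually_le_const hC, continuousAt_fst.eventually_ne hz,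
    continuousAt_snd.eventually_ne hz] with p hhalf hle hp₁ hp₂
  calc ‖polarLog x p.1 - polarLog x p.2‖ ≤ ‖polarLog p.2 p.1‖ := norm_polarLog_sub_le hx hp₂ hp₁
    _ ≤ ‖p.1 - p.2‖ / ‖p.2‖ * (1 + ‖p.1 - p.2‖ / ‖p.2‖) := norm_polarLog_le hE hp₂ hhalf
    _ = ‖p.2‖⁻¹ * (1 + ‖p.1 - p.2‖ / ‖p.2‖) * ‖p.1 - p.2‖ := by ring
    _ ≤ C * ‖p.1 - p.2‖ := by gcongr

theorem qhLength_compl_zero {F : Type*} [NormedAddCommGroup F] [NormedSpace ℝ F] [Nontrivial F]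
    (γ : ℝ → F) : qhLength {0}ᶜ γ = ∫ t in (0 : ℝ)..1, ‖deriv γ t‖ * ‖γ t‖⁻¹ := by
  have : (𝓝[≠] (0 : F)).NeBot := Module.punctured_nhds_neBot ℝ F 0
  have hfrontier : frontier ({0}ᶜ : Set F) = {0} := by
    rw [frontier_compl, frontier, closure_singleton, interior_singleton, sdiff_empty]
  simp only [qhLength, hfrontier, infDist_singleton, dist_zero_right, div_eq_mul_inv]

theorem norm_polarLog_le_qhLength [FiniteDimensional ℝ E] (hE : 1 < Module.rank ℝ E) {x y : E}
    (hx : x ≠ 0) {γ : ℝ → E} (hγ : IsRectPath {0}ᶜ x y γ) :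
    ‖polarLog x y‖ ≤ qhLength {0}ᶜ γ := by
  have : Nontrivial E := ⟨x, 0, hx⟩
  obtain ⟨⟨K, hK⟩, hmaps, rfl, rfl⟩ := hγ
  have hinv : ContinuousOn (fun z : E => ‖z‖⁻¹) {0}ᶜ :=
    continuous_norm.continuousOn.inv₀ fun z hz => norm_ne_zero_iff.2 hz
  simpa [qhLength_compl_zero, polarLog_self hx] using
    (hasLocalLipBoundOn_polarLog hE hx).norm_sub_le_integral hinv zero_le_one hK hmaps

theorem exists_isRectPath_qhLength_eq_norm_log {ψ : ℂ →L[ℝ] E} (hψ : IsConformalMap ψ) {w : ℂ}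
    (hw : w ≠ 0) :
    ∃ γ, IsRectPath {0}ᶜ (ψ 1) (ψ w) γ ∧ qhLength {0}ᶜ γ = ‖Complex.log w‖ := by
  have hψ₀ {z : ℂ} (hz : z ≠ 0) : ψ z ≠ 0 := by simpa using hψ.injective.ne hz
  have : Nontrivial E := ⟨ψ 1, 0, hψ₀ one_ne_zero⟩
  have hne (t : ℝ) : ψ (Complex.exp (t * Complex.log w)) ≠ 0 := hψ₀ (Complex.exp_ne_zero _)
  have hsmooth : ContDiff ℝ 1 fun t : ℝ => ψ (Complex.exp (t * Complex.log w)) :=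
    ψ.contDiff.comp (Complex.ofRealCLM.contDiff.mul contDiff_const).cexp
  refine ⟨_, ⟨hsmooth.locallyLipschitz.locallyLipschitzOn.exists_lipschitzOnWith_of_compact
    isCompact_Icc, fun t _ => hne t, by simp, by simp [Complex.exp_log hw]⟩, ?_⟩
  have hderiv (t : ℝ) : HasDerivAt (fun t : ℝ => ψ (Complex.exp (t * Complex.log w)))
      (ψ (Complex.exp (t * Complex.log w) * Complex.log w)) t := by
    have hlin : HasDerivAt (fun t : ℝ => (t : ℂ) * Complex.log w) (Complex.log w) t := by
      simpa using (hasDerivAt_id t).ofReal_comp.mul_const (Complex.log w)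
    exact ψ.hasFDerivAt.comp_hasDerivAt t hlin.cexp
  have hspeed (t : ℝ) : ‖deriv (fun t : ℝ => ψ (Complex.exp (t * Complex.log w))) t‖ *
      ‖ψ (Complex.exp (t * Complex.log w))‖⁻¹ = ‖Complex.log w‖ := by
    rw [(hderiv t).deriv, ← div_eq_mul_inv, div_eq_iff (norm_ne_zero_iff.2 (hne t)),
      norm_apply_of_isConformalMap hψ norm_one, norm_mul,
      norm_apply_of_isConformalMap hψ norm_one (Complex.exp _)]
    ring
  simp [qhLength_compl_zero, hspeed]

theorem qhDist_compl_zero [FiniteDimensional ℝ E] (hE : 1 < Module.rank ℝ E) {x y : E}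
    (hx : x ≠ 0) (hy : y ≠ 0) : qhDist {0}ᶜ x y = ‖polarLog x y‖ := by
  refine IsLeast.csInf_eq ⟨?_, ?_⟩
  · obtain ⟨ψ, hψ, rfl, w, rfl⟩ := exists_isConformalMap_one_eq hE hx y
    have hw : w ≠ 0 := by
      rintro rfl
      exact hy (map_zero ψ)
    rw [norm_polarLog_map hψ hw]
    exact exists_isRectPath_qhLength_eq_norm_log hψ hw
  · rintro _ ⟨γ, hγ, rfl⟩
    exact norm_polarLog_le_qhLength hE hx hγ

end QhDist

/-- The left-hand side `s ↦ cos s + s sin s` of the equation defining `κ`, at `s = √(p² - 1)`. -/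
noncomputable def criticalFun (s : ℝ) : ℝ :=
  cos s + s * sin s

/-- `κ` is a critical radius if it solves the equation `cos s + s sin s = e⁻¹`, `s = √(κ² - 1)`,
in the interval `[1, π]`. -/
def IsCriticalRadius (κ : ℝ) : Prop :=
  κ ∈ Icc 1 π ∧ criticalFun √(κ ^ 2 - 1) = exp (-1)

theorem hasDerivAt_criticalFun (s : ℝ) : HasDerivAt criticalFun (s * cos s) s := by
  convert! (hasDerivAt_cos s).add ((hasDerivAt_id s).mul (hasDerivAt_sin s)) using 1
  simp

theorem continuous_criticalFun : Continuous criticalFun :=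
  continuous_iff_continuousAt.2 fun s => (hasDerivAt_criticalFun s).continuousAt

theorem strictAntiOn_criticalFun : StrictAntiOn criticalFun (Icc (π / 2) π) := by
  refine strictAntiOn_of_deriv_neg (convex_Icc _ _) continuous_criticalFun.continuousOn
    fun s hs => ?_
  rw [interior_Icc] at hs
  rw [(hasDerivAt_criticalFun s).deriv]
  exact mul_neg_of_pos_of_neg (pi_div_two_pos.trans hs.1)
    (cos_neg_of_pi_div_two_lt_of_lt hs.1 (by linarith [hs.2, pi_pos]))

theorem one_le_criticalFun {s : ℝ} (hs₀ : 0 ≤ s) (hs : s ≤ π / 2) : 1 ≤ criticalFun s := by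
  have hmono : MonotoneOn criticalFun (Icc 0 (π / 2)) := by
    refine monotoneOn_of_deriv_nonneg (convex_Icc _ _) continuous_criticalFun.continuousOn
      (fun t _ => (hasDerivAt_criticalFun t).differentiableAt.differentiableWithinAt) fun t ht => ?_
    rw [interior_Icc] at ht
    rw [(hasDerivAt_criticalFun t).deriv]
    exact mul_nonneg ht.1.le
      (cos_nonneg_of_neg_pi_div_two_le_of_le (by linarith [ht.1, pi_pos]) ht.2.le)
  calc 1 = criticalFun 0 := by simp [criticalFun]
    _ ≤ criticalFun s := hmono ⟨le_rfl, pi_div_two_pos.le⟩ ⟨hs₀, hs⟩ hs₀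

theorem criticalFun_lt_zero {s : ℝ} (hs : 2 ≤ s) (h : (π - s) * (π + s) = 1) :
    criticalFun s < 0 := by
  have hπ := pi_gt_three
  have hlt : 0 < π - s := pos_of_mul_pos_left (h ▸ one_pos) (by linarith)
  have hsin : sin s ≤ π - s := sin_pi_sub s ▸ sin_le hlt.le
  have hcos : 1 - (π - s) ^ 2 / 2 ≤ -cos s := cos_pi_sub s ▸ one_sub_sq_div_two_le_cos
  have hmul : s * sin s ≤ s * (π - s) := by gcongr
  unfold criticalFun
  nlinarith

namespace IsCriticalRadius

variable {κ : ℝ}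

theorem pos (hκ : IsCriticalRadius κ) : 0 < κ := one_pos.trans_le hκ.1.1

theorem sq_sqrt_sq_sub_one (hκ : IsCriticalRadius κ) : √(κ ^ 2 - 1) ^ 2 = κ ^ 2 - 1 :=
  sq_sqrt (by nlinarith [hκ.1.1])

theorem sqrt_lt_pi (hκ : IsCriticalRadius κ) : √(κ ^ 2 - 1) < π := by
  nlinarith [hκ.sq_sqrt_sq_sub_one, hκ.1.1, hκ.1.2]

theorem lt_pi (hκ : IsCriticalRadius κ) : κ < π := by
  refine hκ.1.2.lt_of_ne fun h => ?_
  have hsq := hκ.sq_sqrt_sq_sub_one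
  have hnonneg := Real.sqrt_nonneg (κ ^ 2 - 1)
  have hneg : criticalFun √(κ ^ 2 - 1) < 0 :=
    criticalFun_lt_zero (by nlinarith [pi_gt_three]) (by rw [← h]; linarith)
  exact (hκ.2 ▸ exp_pos (-1)).not_gt hneg

theorem pi_div_two_lt_sqrt (hκ : IsCriticalRadius κ) : π / 2 < √(κ ^ 2 - 1) := by
  by_contra! h
  have hone := one_le_criticalFun (sqrt_nonneg _) h
  rw [hκ.2] at hone
  exact hone.not_gt (exp_lt_one_iff.2 (by norm_num))

theorem exists_mul_cos_eq_one (hκ : IsCriticalRadius κ) :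
    ∃ ψ ∈ Icc 0 π, κ * cos ψ = 1 ∧ κ * sin ψ = √(κ ^ 2 - 1) := by
  have hψ : arccos κ⁻¹ ∈ Icc 0 π := ⟨arccos_nonneg _, arccos_le_pi _⟩
  have hcos : κ * cos (arccos κ⁻¹) = 1 := by
    rw [cos_arccos (by linarith [inv_pos.2 hκ.pos]) (inv_le_one_of_one_le₀ hκ.1.1),
      mul_inv_cancel₀ hκ.pos.ne']
  have hsq : κ ^ 2 - 1 = (κ * sin (arccos κ⁻¹)) ^ 2 := by
    rw [mul_pow, sin_sq]
    linear_combination (κ * cos (arccos κ⁻¹) + 1) * hcos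
  refine ⟨arccos κ⁻¹, hψ, hcos, ?_⟩
  rw [hsq, sqrt_sq (mul_nonneg hκ.pos.le (sin_nonneg_of_mem_Icc hψ))]

/- On the circle `(l, θ) = κ (cos φ, sin φ)` the right-hand side is `κ cos (θ - φ)`, and `θ - φ` is
largest where `κ cos φ = 1`, which is exactly where the critical equation puts the value `e⁻¹`. -/
theorem exp_neg_one_le (hκ : IsCriticalRadius κ) {l θ : ℝ} (hθ : π / 2 ≤ θ)
    (h : l ^ 2 + θ ^ 2 ≤ κ ^ 2) : exp (-1) ≤ l * cos θ + θ * sin θ := by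
  have hκ₀ := hκ.pos
  have hcosθ : cos θ ≤ 0 :=
    cos_nonpos_of_pi_div_two_le_of_le hθ (by nlinarith [hκ.lt_pi, pi_pos])
  obtain ⟨φ, hφ, hsinφ, hl⟩ :=
    exists_mul_sin_eq_and_le_mul_cos hκ₀ (by linarith [pi_pos] : 0 ≤ θ) h
  obtain ⟨ψ, hψ, hcosψ, hsinψ⟩ := hκ.exists_mul_cos_eq_one
  have hgap : θ - φ ≤ √(κ ^ 2 - 1) - ψ := by
    have := mul_le_mul_of_nonneg_left
      (sin_le_sin_add_cos_mul_sub hψ ⟨hφ.1, by linarith [hφ.2, pi_pos]⟩) hκ₀.le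
    rw [hsinφ, mul_add, ← mul_assoc, hcosψ, hsinψ] at this
    linarith
  calc exp (-1) = κ * cos (√(κ ^ 2 - 1) - ψ) := by
        rw [← hκ.2, criticalFun, cos_sub]
        linear_combination -cos √(κ ^ 2 - 1) * hcosψ - sin √(κ ^ 2 - 1) * hsinψ
    _ ≤ κ * cos (θ - φ) := by
        gcongr
        exact cos_le_cos_of_nonneg_of_le_pi (by linarith [hφ.2])
          (by linarith [hψ.1, hκ.sqrt_lt_pi]) hgap
    _ = κ * cos φ * cos θ + θ * sin θ := by
        rw [cos_sub]
        linear_combination sin θ * hsinφ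
    _ ≤ l * cos θ + θ * sin θ := by
        linarith [mul_le_mul_of_nonpos_right hl hcosθ]

end IsCriticalRadius

/-- Up to the positive factor `2 / (t ‖w‖)`, the derivative of `‖log (1 + tζ)‖²` in `t`, expressed
through `L = log ‖w‖` and `θ = arg w` for `w = 1 + tζ`. -/
noncomputable def radialSlope (L θ : ℝ) : ℝ :=
  L * (exp L - cos θ) + θ * sin θ

theorem radialSlope_neg_right (L θ : ℝ) : radialSlope L (-θ) = radialSlope L θ := by
  simp [radialSlope]

theorem radialSlope_abs (L θ : ℝ) : radialSlope L |θ| = radialSlope L θ := by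
  rcases abs_choice θ with h | h <;> simp [h, radialSlope_neg_right]

theorem radialSlope_zero_zero : radialSlope 0 0 = 0 := by
  simp [radialSlope]

theorem radialSlope_neg_one (θ : ℝ) : radialSlope (-1) θ = criticalFun θ - exp (-1) := by
  rw [radialSlope, criticalFun]
  ring

theorem radialSlope_pos_of_nonneg {L θ : ℝ} (hL : 0 ≤ L) (hθ₀ : 0 ≤ θ) (hθ : θ < π)
    (h : 0 < L ∨ 0 < θ) : 0 < radialSlope L θ := by
  have hcos := cos_le_one θ
  have hsin := sin_nonneg_of_nonneg_of_le_pi hθ₀ hθ.le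
  rcases h with h | h
  · exact add_pos_of_pos_of_nonneg
      (mul_pos h (by linarith [one_lt_exp_iff.2 h])) (mul_nonneg hθ₀ hsin)
  · exact add_pos_of_nonneg_of_pos (mul_nonneg hL (by linarith [one_le_exp hL]))
      (mul_pos h (sin_pos_of_pos_of_lt_pi h hθ))

theorem radialSlope_pos_of_neg {L θ : ℝ} (hL : L < 0) (hθ₀ : 0 ≤ θ) (hθ : θ ≤ π / 2) :
    0 < radialSlope L θ := by
  have hone : 1 ≤ cos θ + θ * sin θ := one_le_criticalFun hθ₀ hθ
  have hcos : 0 ≤ cos θ := cos_nonneg_of_neg_pi_div_two_le_of_le (by linarith [pi_pos]) hθ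
  have hsin : 0 ≤ sin θ := sin_nonneg_of_nonneg_of_le_pi hθ₀ (by linarith [pi_pos])
  have hθsin : 0 ≤ θ * sin θ := mul_nonneg hθ₀ hsin
  unfold radialSlope
  rcases le_total (-1) L with h | h
  · nlinarith [exp_lt_one_iff.2 hL]
  · have hexp : -L * exp L ≤ exp (-1) := by simpa using mul_exp_neg_le_exp_neg_one (-L)
    nlinarith [exp_lt_one_iff.2 (show (-1 : ℝ) < 0 by norm_num)]

namespace IsCriticalRadius

variable {κ : ℝ}

theorem exp_neg_one_add_mul_exp_le_radialSlope (hκ : IsCriticalRadius κ) {L θ : ℝ} (hθ : π / 2 ≤ θ)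
    (h : L ^ 2 + θ ^ 2 ≤ κ ^ 2) : exp (-1) + L * exp L ≤ radialSlope L θ := by
  have := hκ.exp_neg_one_le (l := -L) hθ (by rwa [neg_sq])
  unfold radialSlope
  linarith

theorem abs_lt_pi (hκ : IsCriticalRadius κ) {L θ : ℝ} (h : L ^ 2 + θ ^ 2 ≤ κ ^ 2) : |θ| < π :=
  (abs_le_of_sq_le_sq (by nlinarith) hκ.pos.le).trans_lt hκ.lt_pi

theorem radialSlope_pos (hκ : IsCriticalRadius κ) {L θ : ℝ} (h : L ^ 2 + θ ^ 2 ≤ κ ^ 2)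
    (h₀ : L ≠ 0 ∨ θ ≠ 0) (hL : L ≠ -1) : 0 < radialSlope L θ := by
  rw [← radialSlope_abs]
  rcases le_or_gt 0 L with hL₀ | hL₀
  · exact radialSlope_pos_of_nonneg hL₀ (abs_nonneg θ) (hκ.abs_lt_pi h)
      (h₀.imp hL₀.lt_of_ne' abs_pos.2)
  rcases le_total |θ| (π / 2) with hθ | hθ
  · exact radialSlope_pos_of_neg hL₀ (abs_nonneg θ) hθ
  have hexp : -L * exp L < exp (-1) := by
    calc -L * exp L < exp (-1 - L) * exp L := by
          gcongr
          linarith [add_one_lt_exp (x := -1 - L) (by contrapose! hL; linarith)]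
      _ = exp (-1) := by rw [← exp_add, sub_add_cancel]
  linarith [hκ.exp_neg_one_add_mul_exp_le_radialSlope (L := L) hθ (by rwa [sq_abs])]

theorem radialSlope_nonneg (hκ : IsCriticalRadius κ) {L θ : ℝ} (h : L ^ 2 + θ ^ 2 ≤ κ ^ 2) :
    0 ≤ radialSlope L θ := by
  by_cases h₀ : L ≠ 0 ∨ θ ≠ 0
  · rcases eq_or_ne L (-1) with rfl | hL
    · rw [← radialSlope_abs]
      rcases le_total |θ| (π / 2) with hθ | hθ
      · exact (radialSlope_pos_of_neg (by norm_num) (abs_nonneg θ) hθ).le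
      · simpa using
          hκ.exp_neg_one_add_mul_exp_le_radialSlope (L := -1) hθ (by rwa [sq_abs])
    · exact (hκ.radialSlope_pos h h₀ hL).le
  · push Not at h₀
    rw [h₀.1, h₀.2, radialSlope_zero_zero]

end IsCriticalRadius

section PlaneRays

open Filter Topology

theorem mem_slitPlane_of_norm_log_lt_pi {w : ℂ} (hw : w ≠ 0) (h : ‖Complex.log w‖ < π) :
    w ∈ Complex.slitPlane := by
  refine Complex.mem_slitPlane_iff_arg.2 ⟨fun harg => ?_, hw⟩
  have := (Complex.abs_im_le_norm (Complex.log w)).trans_lt h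
  rw [Complex.log_im, harg, abs_of_pos pi_pos] at this
  exact this.false

theorem one_add_mul_mem_slitPlane {ζ : ℂ} (h : 1 + ζ ∈ Complex.slitPlane) {t : ℝ}
    (ht : t ∈ Icc (0 : ℝ) 1) : 1 + t * ζ ∈ Complex.slitPlane := by
  simpa using Complex.starConvex_one_slitPlane.add_smul_mem h ht.1 ht.2

/-- The squared norm of the logarithm along the ray from `1` in direction `ζ`. -/
noncomputable def rayLogSq (ζ : ℂ) (t : ℝ) : ℝ :=
  ‖Complex.log (1 + t * ζ)‖ ^ 2

theorem inner_log_sub_one_div_mul_norm {w : ℂ} (hw : w ≠ 0) :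
    inner ℝ (Complex.log w) ((w - 1) / w) * ‖w‖ = radialSlope (Real.log ‖w‖) w.arg := by
  have hnorm : 0 < ‖w‖ := norm_pos_iff.2 hw
  have hdiv : (w - 1) / w = 1 - w⁻¹ := by field_simp
  rw [radialSlope, Real.exp_log hnorm, hdiv, Complex.inner]
  simp only [Complex.mul_re, Complex.conj_re, Complex.conj_im, Complex.log_re, Complex.log_im,
    Complex.sub_re, Complex.sub_im, Complex.one_re, Complex.one_im, Complex.inv_re, Complex.inv_im,
    Complex.normSq_eq_norm_sq]
  rw [← Complex.norm_mul_cos_arg w, ← Complex.norm_mul_sin_arg w]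
  field_simp
  ring

theorem hasDerivAt_rayLogSq {ζ : ℂ} {t : ℝ} (ht : t ≠ 0) (h : 1 + t * ζ ∈ Complex.slitPlane) :
    HasDerivAt (rayLogSq ζ) (2 * radialSlope (Real.log ‖1 + t * ζ‖) (1 + t * ζ).arg /
      (t * ‖1 + t * ζ‖)) t := by
  have hw : 1 + t * ζ ≠ 0 := Complex.slitPlane_ne_zero h
  have hline : HasDerivAt (fun t : ℝ => 1 + (t : ℂ) * ζ) ζ t := by
    simpa using ((hasDerivAt_id t).ofReal_comp.mul_const ζ).const_add 1
  have hray : ζ / (1 + t * ζ) = t⁻¹ • ((1 + t * ζ - 1) / (1 + t * ζ)) := by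
    rw [add_sub_cancel_left, Complex.real_smul, Complex.ofReal_inv]
    have : (t : ℂ) ≠ 0 := Complex.ofReal_ne_zero.2 ht
    field_simp
  convert! (hline.clog_real h).norm_sq using 1
  rw [← inner_log_sub_one_div_mul_norm hw, hray, inner_smul_right]
  have := norm_ne_zero_iff.2 hw
  field_simp

theorem continuousOn_rayLogSq {ζ : ℂ} (h : 1 + ζ ∈ Complex.slitPlane) :
    ContinuousOn (rayLogSq ζ) (Icc 0 1) := by
  intro t ht
  have hslit := one_add_mul_mem_slitPlane h ht
  unfold rayLogSq
  fun_prop (disch := assumption)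

namespace IsCriticalRadius

variable {κ : ℝ}

/- Running the ray backwards, `rayLogSq` cannot cross the affine barrier from `rayLogSq ζ 1` to
`κ²`: below height `κ²` its derivative has the right sign. -/
theorem rayLogSq_le (hκ : IsCriticalRadius κ) {ζ : ℂ} (hζ : 1 + ζ ≠ 0)
    (h : ‖Complex.log (1 + ζ)‖ < κ) {t : ℝ} (ht : t ∈ Icc (0 : ℝ) 1) : rayLogSq ζ t ≤ κ ^ 2 := by
  have hslit := mem_slitPlane_of_norm_log_lt_pi hζ (h.trans hκ.lt_pi)
  have hlt : rayLogSq ζ 1 < κ ^ 2 := by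
    simpa [rayLogSq] using pow_lt_pow_left₀ h (norm_nonneg _) two_ne_zero
  have hmem : ∀ τ ∈ Icc (0 : ℝ) 1, 1 - τ ∈ Icc (0 : ℝ) 1 := fun τ hτ =>
    ⟨sub_nonneg.2 hτ.2, sub_le_self _ hτ.1⟩
  have hbarrier := image_le_of_deriv_right_lt_deriv_boundary (a := 0) (b := 1)
    (f := fun τ => rayLogSq ζ (1 - τ))
    (B := fun τ => rayLogSq ζ 1 + τ * (κ ^ 2 - rayLogSq ζ 1))
    (B' := fun _ => κ ^ 2 - rayLogSq ζ 1)
    ((continuousOn_rayLogSq hslit).comp (by fun_prop) hmem)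
    (fun τ hτ => ((hasDerivAt_rayLogSq (sub_pos.2 hτ.2).ne'
      (one_add_mul_mem_slitPlane hslit (hmem τ ⟨hτ.1, hτ.2.le⟩))).comp_const_sub
        1 τ).hasDerivWithinAt)
    (by simp) (fun τ => by simpa using ((hasDerivAt_id τ).mul_const _).const_add (rayLogSq ζ 1))
    fun τ hτ heq => ?_
  · have := hbarrier (hmem t ht)
    simp only [sub_sub_cancel] at this
    nlinarith [ht.1, ht.2]
  · have hle : rayLogSq ζ (1 - τ) ≤ κ ^ 2 := by
      rw [heq]
      nlinarith [hτ.2]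
    rw [rayLogSq, norm_log_sq] at hle
    have hslope := hκ.radialSlope_nonneg hle
    have ht₀ : 0 ≤ 1 - τ := (sub_pos.2 hτ.2).le
    refine lt_of_le_of_lt ?_ (sub_pos.2 hlt)
    rw [neg_nonpos]
    positivity

theorem norm_log_one_add_mul_le (hκ : IsCriticalRadius κ) {ζ : ℂ} (hζ : 1 + ζ ≠ 0)
    (h : ‖Complex.log (1 + ζ)‖ ≤ κ) {t : ℝ} (ht : t ∈ Icc (0 : ℝ) 1) :
    ‖Complex.log (1 + t * ζ)‖ ≤ κ := by
  have hexp : ∀ z ∈ closedBall (0 : ℂ) κ,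
      Complex.log (Complex.exp z) = z ∧ Complex.exp z ∈ Complex.slitPlane := by
    intro z hz
    have hz : ‖z‖ < π := (mem_closedBall_zero_iff.1 hz).trans_lt hκ.lt_pi
    have him := abs_lt.1 ((Complex.abs_im_le_norm z).trans_lt hz)
    have hlog := Complex.log_exp him.1 him.2.le
    exact ⟨hlog, mem_slitPlane_of_norm_log_lt_pi (Complex.exp_ne_zero z) (by rwa [hlog])⟩
  have hmaps : MapsTo (fun z => Complex.log (1 + t * (Complex.exp z - 1))) (ball 0 κ)
      (closedBall 0 κ) := by
    intro z hz
    have hz' := (hexp z (ball_subset_closedBall hz)).1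
    refine mem_closedBall_zero_iff.2 (le_of_sq_le_sq (hκ.rayLogSq_le ?_ ?_ ht) hκ.pos.le)
    · simp
    · rw [add_sub_cancel, hz']
      exact mem_ball_zero_iff.1 hz
  have hcont : ContinuousOn (fun z => Complex.log (1 + t * (Complex.exp z - 1)))
      (closure (ball 0 κ)) := by
    rw [closure_ball _ hκ.pos.ne']
    intro z hz
    have hslit := one_add_mul_mem_slitPlane (ζ := Complex.exp z - 1)
      (by rw [add_sub_cancel]; exact (hexp z hz).2) ht
    fun_prop (disch := assumption)
  have := hmaps.closure_of_continuousOn hcont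
    (closure_ball (0 : ℂ) hκ.pos.ne' ▸ mem_closedBall_zero_iff.2 h)
  simpa [isClosed_closedBall.closure_eq, Complex.exp_log hζ] using this

theorem strictMonoOn_rayLogSq (hκ : IsCriticalRadius κ) {ζ : ℂ} (hζ₀ : ζ ≠ 0) (hζ : 1 + ζ ≠ 0)
    (h : ‖Complex.log (1 + ζ)‖ ≤ κ) : StrictMonoOn (rayLogSq ζ) (Icc 0 1) := by
  have hslit := mem_slitPlane_of_norm_log_lt_pi hζ (h.trans_lt hκ.lt_pi)
  have hderiv : ∀ t ∈ Ioo (0 : ℝ) 1, HasDerivAt (rayLogSq ζ) _ t := fun t ht =>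
    hasDerivAt_rayLogSq ht.1.ne' (one_add_mul_mem_slitPlane hslit (Ioo_subset_Icc_self ht))
  have hle : ∀ t ∈ Ioo (0 : ℝ) 1,
      Real.log ‖1 + t * ζ‖ ^ 2 + (1 + t * ζ).arg ^ 2 ≤ κ ^ 2 := fun t ht => by
    rw [← norm_log_sq]
    gcongr
    exact hκ.norm_log_one_add_mul_le hζ h (Ioo_subset_Icc_self ht)
  refine strictMonoOn_Icc_of_deriv_nonneg_of_exists_ne (continuousOn_rayLogSq hslit)
    (fun t ht => (hderiv t ht).differentiableAt.differentiableWithinAt) (fun t ht => ?_)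
    fun c hc d hd hcd => ?_
  · rw [(hderiv t ht).deriv]
    have := hκ.radialSlope_nonneg (hle t ht)
    have := ht.1
    positivity
  · obtain ⟨t, ht, hnorm⟩ := exists_norm_add_smul_ne hζ₀ 1 (exp (-1)) hcd
    have ht' : t ∈ Ioo (0 : ℝ) 1 := ⟨hc.1.trans_lt ht.1, ht.2.trans_le hd.2⟩
    have hw : 1 + t * ζ ≠ 0 :=
      Complex.slitPlane_ne_zero (one_add_mul_mem_slitPlane hslit (Ioo_subset_Icc_self ht'))
    have hnorm_pos : 0 < ‖1 + t * ζ‖ := norm_pos_iff.2 hw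
    refine ⟨t, ht, ?_⟩
    rw [(hderiv t ht').deriv]
    refine (div_pos (mul_pos two_pos (hκ.radialSlope_pos (hle t ht') ?_ ?_))
      (mul_pos ht'.1 hnorm_pos)).ne'
    · by_contra! hzero
      have hlog : Complex.log (1 + t * ζ) = 0 :=
        Complex.ext ((Complex.log_re _).trans hzero.1) ((Complex.log_im _).trans hzero.2)
      have := Complex.exp_log hw
      simp [hlog, ht'.1.ne', hζ₀] at this
    · contrapose! hnorm
      rw [← hnorm, Real.exp_log (by simpa using hnorm_pos), Complex.real_smul]

theorem norm_log_one_add_mul_lt (hκ : IsCriticalRadius κ) {ζ : ℂ} (hζ₀ : ζ ≠ 0) (hζ : 1 + ζ ≠ 0)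
    (h : ‖Complex.log (1 + ζ)‖ ≤ κ) {t : ℝ} (ht : t ∈ Ioo (0 : ℝ) 1) :
    1 + t * ζ ≠ 0 ∧ ‖Complex.log (1 + t * ζ)‖ < ‖Complex.log (1 + ζ)‖ := by
  have hslit := mem_slitPlane_of_norm_log_lt_pi hζ (h.trans_lt hκ.lt_pi)
  have htI := Ioo_subset_Icc_self ht
  have hlt : rayLogSq ζ t < rayLogSq ζ 1 :=
    hκ.strictMonoOn_rayLogSq hζ₀ hζ h htI (right_mem_Icc.2 zero_le_one) ht.2
  simp only [rayLogSq, Complex.ofReal_one, one_mul] at hlt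
  exact ⟨Complex.slitPlane_ne_zero (one_add_mul_mem_slitPlane hslit htI),
    lt_of_pow_lt_pow_left₀ 2 (norm_nonneg _) hlt⟩

theorem exists_norm_log_one_add_mul_lt (hκ : IsCriticalRadius κ) {r : ℝ} (hr : κ < r)
    (hrπ : r ≤ π) : ∃ ζ : ℂ, ‖Complex.log (1 + ζ)‖ = r ∧
      ∃ t : ℝ, 1 < t ∧ 1 + t * ζ ≠ 0 ∧ ‖Complex.log (1 + t * ζ)‖ < r := by
  have hr₁ : 1 ≤ r := hκ.1.1.trans hr.le
  set s := √(r ^ 2 - 1)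
  have hsq : s ^ 2 = r ^ 2 - 1 := sq_sqrt (by nlinarith)
  have hs₀ : 0 ≤ s := sqrt_nonneg _
  have hsπ : s < π := by nlinarith
  have hκs : √(κ ^ 2 - 1) < s := sqrt_lt_sqrt (by nlinarith [hκ.1.1]) (by nlinarith [hκ.pos])
  have hslope : radialSlope (-1) s < 0 := by
    rw [radialSlope_neg_one, ← hκ.2, sub_neg]
    exact strictAntiOn_criticalFun ⟨hκ.pi_div_two_lt_sqrt.le, hκ.sqrt_lt_pi.le⟩
      ⟨(hκ.pi_div_two_lt_sqrt.trans hκs).le, hsπ.le⟩ hκs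
  set w : ℂ := Complex.exp ⟨-1, s⟩
  have hlog : Complex.log w = ⟨-1, s⟩ := Complex.log_exp (by simp; linarith [pi_pos]) hsπ.le
  have hnorm : ‖w‖ = exp (-1) := Complex.norm_exp _
  have harg : w.arg = s := by rw [← Complex.log_im, hlog]
  have hnormlog : ‖Complex.log w‖ = r := by
    rw [← sq_eq_sq₀ (norm_nonneg _) (by linarith), norm_log_sq, hnorm, harg, Real.log_exp]
    linarith
  refine ⟨w - 1, by rwa [add_sub_cancel], ?_⟩
  have hone : 1 + ((1 : ℝ) : ℂ) * (w - 1) = w := by simp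
  have hslit : 1 + ((1 : ℝ) : ℂ) * (w - 1) ∈ Complex.slitPlane := by
    rw [hone, Complex.mem_slitPlane_iff_arg, harg]
    exact ⟨hsπ.ne, Complex.exp_ne_zero _⟩
  have hderiv := hasDerivAt_rayLogSq one_ne_zero hslit
  rw [hone, hnorm, harg, Real.log_exp, one_mul] at hderiv
  have hlts := eventually_nhdsGT_lt_of_hasDerivAt_neg hderiv
    (div_neg_of_neg_of_pos (by linarith) (exp_pos _))
  have hslits : ∀ᶠ t : ℝ in 𝓝[>] (1 : ℝ), 1 + t * (w - 1) ∈ Complex.slitPlane :=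
    nhdsWithin_le_nhds <| ContinuousAt.eventually_mem (by fun_prop)
      (Complex.isOpen_slitPlane.mem_nhds hslit)
  obtain ⟨t, hlt, htslit, ht⟩ := (hlts.and (hslits.and self_mem_nhdsWithin)).exists
  refine ⟨t, ht, Complex.slitPlane_ne_zero htslit, lt_of_pow_lt_pow_left₀ 2 (by linarith) ?_⟩
  rwa [rayLogSq, rayLogSq, hone, hnormlog] at hlt

end IsCriticalRadius

end PlaneRays

section Balls

variable {E : Type*} [NormedAddCommGroup E] [InnerProductSpace ℝ E]

theorem norm_mem_Icc_of_norm_polarLog_le {x y : E} (hx : x ≠ 0) (hy : y ≠ 0) {r : ℝ}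
    (h : ‖polarLog x y‖ ≤ r) : ‖y‖ ∈ Icc (exp (-r) * ‖x‖) (exp r * ‖x‖) := by
  have hx' := norm_pos_iff.2 hx
  have hlog := abs_le.1 ((Complex.abs_re_le_norm (polarLog x y)).trans h)
  have hratio : 0 < ‖y‖ / ‖x‖ := div_pos (norm_pos_iff.2 hy) hx'
  exact ⟨(le_div_iff₀ hx').1 ((Real.le_log_iff_exp_le hratio).1 hlog.1),
    (div_le_iff₀ hx').1 ((Real.log_le_iff_le_exp hratio).1 hlog.2)⟩

variable [FiniteDimensional ℝ E] {x : E} {r : ℝ}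

theorem mem_qhBall_compl_zero (hE : 1 < Module.rank ℝ E) (hx : x ≠ 0) {y : E} :
    y ∈ qhBall {0}ᶜ x r ↔ y ≠ 0 ∧ ‖polarLog x y‖ < r :=
  and_congr_right fun hy => by rw [qhDist_compl_zero hE hx hy]

theorem map_mem_qhBall_compl_zero (hE : 1 < Module.rank ℝ E) {ψ : ℂ →L[ℝ] E}
    (hψ : IsConformalMap ψ) {w : ℂ} (hw : w ≠ 0) :
    ψ w ∈ qhBall {0}ᶜ (ψ 1) r ↔ ‖Complex.log w‖ < r := by
  have hψ₀ {z : ℂ} (hz : z ≠ 0) : ψ z ≠ 0 := by simpa using hψ.injective.ne hz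
  rw [mem_qhBall_compl_zero hE (hψ₀ one_ne_zero), norm_polarLog_map hψ hw,
    and_iff_right (hψ₀ hw)]

theorem isOpen_qhBall_compl_zero (hE : 1 < Module.rank ℝ E) (hx : x ≠ 0) :
    IsOpen (qhBall {0}ᶜ x r) := by
  have : qhBall {0}ᶜ x r = {0}ᶜ ∩ (fun y => ‖polarLog x y‖) ⁻¹' Iio r :=
    Set.ext fun _ => mem_qhBall_compl_zero hE hx
  rw [this]
  exact (continuousOn_polarLog hx).norm.isOpen_inter_preimage isOpen_compl_singleton isOpen_Iio

theorem isBounded_qhBall_compl_zero (hE : 1 < Module.rank ℝ E) (hx : x ≠ 0) :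
    Bornology.IsBounded (qhBall {0}ᶜ x r) :=
  isBounded_iff_forall_norm_le.2 ⟨exp r * ‖x‖, fun _ hy =>
    have hy := (mem_qhBall_compl_zero hE hx).1 hy
    (norm_mem_Icc_of_norm_polarLog_le hx hy.1 hy.2.le).2⟩

theorem closure_qhBall_compl_zero_subset (hE : 1 < Module.rank ℝ E) (hx : x ≠ 0) :
    closure (qhBall {0}ᶜ x r) ⊆ {y | y ≠ 0 ∧ ‖polarLog x y‖ ≤ r} := by
  have hne : {y : E | exp (-r) * ‖x‖ ≤ ‖y‖} ⊆ {0}ᶜ := fun _ hy =>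
    norm_pos_iff.1 (lt_of_lt_of_le (by positivity) hy)
  have hclosed : IsClosed ({y : E | exp (-r) * ‖x‖ ≤ ‖y‖} ∩ (fun y => ‖polarLog x y‖) ⁻¹' Iic r) :=
    ((continuousOn_polarLog hx).norm.mono hne).preimage_isClosed_of_isClosed
      (isClosed_le continuous_const continuous_norm) isClosed_Iic
  refine (closure_minimal (fun y hy => ?_) hclosed).trans
    (inter_subset_inter_left _ hne)
  obtain ⟨hy₀, hy⟩ := (mem_qhBall_compl_zero hE hx).1 hy
  exact ⟨(norm_mem_Icc_of_norm_polarLog_le hx hy₀ hy.le).1, hy.le⟩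

variable {κ : ℝ}

theorem strictlyStarlike_qhBall_compl_zero (hE : 1 < Module.rank ℝ E) (hx : x ≠ 0)
    (hκ : IsCriticalRadius κ) (hr₀ : 0 < r) (hr : r ≤ κ) :
    StrictlyStarlike (qhBall {0}ᶜ x r) x := by
  have hmem : x ∈ qhBall {0}ᶜ x r :=
    (mem_qhBall_compl_zero hE hx).2 ⟨hx, by rwa [polarLog_self hx, norm_zero]⟩
  refine strictlyStarlike_of_openSegment_subset (isOpen_qhBall_compl_zero hE hx)
    (isBounded_qhBall_compl_zero hE hx) hmem fun y hy => ?_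
  rcases eq_or_ne y x with rfl | hyx
  · simpa using hmem
  obtain ⟨hy₀, hyr⟩ := closure_qhBall_compl_zero_subset hE hx hy
  obtain ⟨ψ, hψ, rfl, ζ, hζ⟩ := exists_isConformalMap_one_eq hE hx (y - x)
  obtain rfl : y = ψ (1 + ζ) := by rw [map_add, hζ, add_sub_cancel]
  have hζ₀ : ζ ≠ 0 := by
    rintro rfl
    simp at hyx
  have hw : 1 + ζ ≠ 0 := by
    rintro h
    simp [h] at hy₀
  rw [norm_polarLog_map hψ hw] at hyr
  rw [openSegment_eq_image']
  rintro _ ⟨t, ht, rfl⟩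
  have hline : ψ 1 + t • (ψ (1 + ζ) - ψ 1) = ψ (1 + t * ζ) := by
    rw [← map_sub, add_sub_cancel_left, ← map_smul, ← map_add, Complex.real_smul]
  obtain ⟨hne, hlt⟩ := hκ.norm_log_one_add_mul_lt hζ₀ hw (hyr.trans hr) ht
  simp only [hline]
  exact (map_mem_qhBall_compl_zero hE hψ hne).2 (hlt.trans_le hyr)

theorem not_starConvex_qhBall_compl_zero (hE : 1 < Module.rank ℝ E) (hx : x ≠ 0)
    (hκ : IsCriticalRadius κ) (hr : κ < r) : ¬ StarConvex ℝ x (qhBall {0}ᶜ x r) := by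
  intro hstar
  obtain ⟨ψ, hψ, rfl, -⟩ := exists_isConformalMap_one_eq hE hx 0
  rcases lt_or_ge π r with hπr | hrπ
  · have hneg : -ψ 1 ∈ qhBall {0}ᶜ (ψ 1) r := by
      rw [← map_neg, map_mem_qhBall_compl_zero hE hψ (by simp), Complex.log_neg_one]
      simpa [abs_of_pos pi_pos] using hπr
    have hzero : (0 : E) ∈ qhBall {0}ᶜ (ψ 1) r := by
      simpa using hstar hneg (a := 1 / 2) (b := 1 / 2) (by norm_num) (by norm_num) (by norm_num)
    exact hzero.1 rfl
  · obtain ⟨ζ, hζ, t, ht, htζ, hlt⟩ := hκ.exists_norm_log_one_add_mul_lt hr hrπ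
    have hout := (map_mem_qhBall_compl_zero hE hψ htζ).2 hlt
    have hw : 1 + ζ ≠ 0 := by
      intro h
      rw [h] at hζ
      simp at hζ
      linarith [hκ.pos]
    have hline : ψ 1 + t⁻¹ • (ψ (1 + t * ζ) - ψ 1) = ψ (1 + ζ) := by
      rw [← map_sub, add_sub_cancel_left, ← Complex.real_smul, map_smul,
        inv_smul_smul₀ (by linarith), map_add]
    have hin := hstar.add_smul_sub_mem hout (t := t⁻¹) (by positivity)
      (inv_le_one_of_one_le₀ ht.le)
    rw [hline, map_mem_qhBall_compl_zero hE hψ hw, hζ] at hin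
    exact hin.false

end Balls

end PuncturedSpace

theorem qh_ball_punctured_starlike_general {E : Type*} [NormedAddCommGroup E]
    [InnerProductSpace ℝ E] [FiniteDimensional ℝ E] (hE : 1 < Module.rank ℝ E) {x : E} (hx : x ≠ 0)
    {κ : ℝ} (hκ : PuncturedSpace.IsCriticalRadius κ) (r : ℝ) :
    (0 < r → r ≤ κ → StrictlyStarlike (qhBall {0}ᶜ x r) x) ∧
      (κ < r → ¬ StarConvex ℝ x (qhBall {0}ᶜ x r)) :=
  ⟨PuncturedSpace.strictlyStarlike_qhBall_compl_zero hE hx hκ,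
    PuncturedSpace.not_starConvex_qhBall_compl_zero hE hx hκ⟩

/-- in the punctured space, quasihyperbolic balls are strictly starlike
with respect to their center exactly for radii `r ∈ (0,κ]`, where `κ ≈ 2.83297` is
the unique solution `p ∈ [1,π]` of `cos √(p²-1) + √(p²-1) sin √(p²-1) = e⁻¹`. -/
theorem qh_ball_punctured_starlike (n : ℕ) (hn : 2 ≤ n)
    (x : EuclideanSpace ℝ (Fin n)) (hx : x ≠ 0)
    (κ : ℝ) (hκmem : κ ∈ Icc 1 Real.pi)
    (hκeq : Real.cos (Real.sqrt (κ ^ 2 - 1)) +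
        Real.sqrt (κ ^ 2 - 1) * Real.sin (Real.sqrt (κ ^ 2 - 1)) = Real.exp (-1))
    (hκuniq : ∀ p ∈ Icc 1 Real.pi,
      Real.cos (Real.sqrt (p ^ 2 - 1)) +
          Real.sqrt (p ^ 2 - 1) * Real.sin (Real.sqrt (p ^ 2 - 1)) = Real.exp (-1) →
        p = κ)
    (r : ℝ) :
    (0 < r → r ≤ κ →
        StrictlyStarlike (qhBall ({0}ᶜ : Set (EuclideanSpace ℝ (Fin n))) x r) x) ∧
      (κ < r → ¬ StarConvex ℝ x (qhBall ({0}ᶜ : Set (EuclideanSpace ℝ (Fin n))) x r)) := by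
  exact qh_ball_punctured_starlike_general
    (Module.one_lt_rank_of_one_lt_finrank (by simpa using Nat.lt_of_succ_le hn)) hx ⟨hκmem, hκeq⟩ r
end
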